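/- arXiv:1812.00266 — 10 statements merged into one kernel-verified Lean document; each statement's English description precedes it below -/
import Mathlib

section
/- Let a < t be real numbers and let f : ℝ → ℝ be continuously differentiable on [a, t]. Then the left-sided Caputo–Fabrizio fractional derivative of f tends to the ordinary derivative as the order tends to 1 from the left: lim_{α → 1⁻} (1/(1−α)) ∫_a^t f′(τ) · exp((α/(α−1))·(t−τ)) dτ = f′(t). -/
open MeasureTheory intervalIntegral Real Set Filter

open scoped Topology

/-!
Put `r = α / (1 - α)`, so that `r → ∞` as `α → 1⁻` and the fractional derivative becomes
`α⁻¹ r ∫ e^{-r(t-τ)} f'(τ) dτ`. Integrating by parts against `f(τ) - f(t)` moves the derivative onto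
the exponential: up to a boundary term that decays exponentially in `r`, what remains is
`∫ r² (t-τ) e^{-r(t-τ)} · (f(τ) - f(t)) / (τ-t) dτ`. The weight is a probability density
concentrating at `τ = t`, where the difference quotient tends to the derivative.
-/

theorem tendsto_pow_mul_exp_neg_mul_atTop_nhds_zero (n : ℕ) {b : ℝ} (hb : 0 < b) :
    Tendsto (fun r : ℝ ↦ r ^ n * exp (-(r * b))) atTop (𝓝 0) := by
  refine (isLittleO_pow_exp_pos_mul_atTop n hb).tendsto_div_nhds_zero.congr fun r ↦ ?_
  rw [exp_neg, mul_comm r b, div_eq_mul_inv]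

theorem tendsto_div_one_sub_nhdsLT_one :
    Tendsto (fun α : ℝ ↦ α / (1 - α)) (𝓝[<] 1) atTop := by
  have hid : Tendsto (fun α : ℝ ↦ α) (𝓝[<] 1) (𝓝 1) := nhdsWithin_le_nhds
  have hsub : Tendsto (fun α : ℝ ↦ 1 - α) (𝓝[<] 1) (𝓝[>] 0) := by
    refine tendsto_nhdsWithin_iff.2 ⟨by simpa using hid.const_sub 1, ?_⟩
    filter_upwards [self_mem_nhdsWithin] with α hα using sub_pos.2 (mem_Iio.1 hα)
  exact hid.pos_mul_atTop one_pos hsub.inv_tendsto_nhdsGT_zero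

/-- The density of the Erlang distribution (Gamma distribution of shape `2`) of rate `r`, given by
its formula on `[0, ∞)` without truncation to `0` for negative `s`. As `r → ∞` it is an approximate
identity at `0⁺`. -/
noncomputable def erlangKernel (r s : ℝ) : ℝ :=
  r ^ 2 * s * exp (-(r * s))

namespace erlangKernel

@[fun_prop]
theorem continuous (r : ℝ) : Continuous (erlangKernel r) := by
  unfold erlangKernel
  fun_prop

theorem nonneg (r : ℝ) {s : ℝ} (hs : 0 ≤ s) : 0 ≤ erlangKernel r s := by
  unfold erlangKernel
  positivity

theorem integral_eq (r b : ℝ) :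
    ∫ s in 0..b, erlangKernel r s = 1 - (1 + r * b) * exp (-(r * b)) := by
  have hderiv (s : ℝ) :
      HasDerivAt (fun s ↦ -((1 + r * s) * exp (-(r * s)))) (erlangKernel r s) s := by
    have hlin : HasDerivAt (fun s ↦ r * s) r s := by
      simpa using (hasDerivAt_id s).const_mul r
    refine ((hlin.const_add 1).mul hlin.fun_neg.exp).neg.congr_deriv ?_
    unfold erlangKernel
    ring
  rw [integral_eq_sub_of_hasDerivAt (fun s _ ↦ hderiv s) ((continuous r).intervalIntegrable _ _)]
  simp only [mul_zero, neg_zero, exp_zero]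
  ring

theorem tendsto_integral {b : ℝ} (hb : 0 < b) :
    Tendsto (fun r ↦ ∫ s in 0..b, erlangKernel r s) atTop (𝓝 1) := by
  have h₀ := tendsto_pow_mul_exp_neg_mul_atTop_nhds_zero 0 hb
  have h₁ := (tendsto_pow_mul_exp_neg_mul_atTop_nhds_zero 1 hb).const_mul b
  have hlim := (h₀.add h₁).const_sub 1
  rw [mul_zero, add_zero, sub_zero] at hlim
  refine hlim.congr fun r ↦ ?_
  rw [integral_eq]
  ring

theorem tendstoUniformlyOn_Icc {ε : ℝ} (hε : 0 < ε) (b : ℝ) :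
    TendstoUniformlyOn erlangKernel 0 atTop (Icc ε b) := by
  have hbound : Tendsto (fun r : ℝ ↦ b * (r ^ 2 * exp (-(r * ε)))) atTop (𝓝 0) := by
    simpa using (tendsto_pow_mul_exp_neg_mul_atTop_nhds_zero 2 hε).const_mul b
  rw [Metric.tendstoUniformlyOn_iff]
  intro δ hδ
  filter_upwards [hbound.eventually_lt_const hδ, eventually_ge_atTop 0] with r hr hr₀ s hs
  have hs₀ : 0 ≤ s := hε.le.trans hs.1
  rw [Pi.zero_apply, dist_zero_left, norm_of_nonneg (nonneg r hs₀)]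
  calc erlangKernel r s
      = s * (r ^ 2 * exp (-(r * s))) := by unfold erlangKernel; ring
    _ ≤ b * (r ^ 2 * exp (-(r * ε))) := by gcongr; exacts [hs₀.trans hs.2, hs.2, hs.1]
    _ < δ := hr

end erlangKernel

section VectorValued

variable {E : Type*} [NormedAddCommGroup E] [NormedSpace ℝ E] {a t : ℝ}

theorem intervalIntegrable_slope_of_hasDerivWithinAt (hat : a ≤ t) {f : ℝ → E} {c : E}
    (hf : ContinuousOn f (Icc a t)) (hc : HasDerivWithinAt f c (Iio t) t) :
    IntervalIntegrable (slope f t) volume a t := by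
  have hslope : ContinuousOn (slope f t) (Ico a t) :=
    ((continuousOn_id.sub continuousOn_const).inv₀ fun τ hτ ↦ (sub_neg.2 hτ.2).ne).smul
      ((hf.mono Ico_subset_Icc_self).sub continuousOn_const)
  have hlim : Tendsto (slope f t) (𝓝[<] t) (𝓝 c) :=
    (hasDerivWithinAt_iff_tendsto_slope' self_notMem_Iio).1 hc
  have hupdate : ContinuousOn (Function.update (slope f t) t c) (Icc a t) := by
    rw [continuousOn_update_iff, Icc_sdiff_right]
    exact ⟨hslope, fun _ ↦ hlim.mono_left (nhdsWithin_mono _ Ico_subset_Iio_self)⟩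
  rw [intervalIntegrable_iff_integrableOn_Ioo_of_le hat]
  exact (hupdate.integrableOn_Icc.mono_set Ioo_subset_Icc_self).congr_fun
    (fun τ hτ ↦ Function.update_of_ne hτ.2.ne _ _) measurableSet_Ioo

variable [CompleteSpace E]

theorem tendsto_integral_erlangKernel_smul (hat : a < t) {g : ℝ → E} {c : E}
    (hg : IntervalIntegrable g volume a t) (hlim : Tendsto g (𝓝[<] t) (𝓝 c)) :
    Tendsto (fun r ↦ ∫ τ in a..t, erlangKernel r (t - τ) • g τ) atTop (𝓝 c) := by
  simp only [integral_of_le hat.le, integral_Ioc_eq_integral_Ioo]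
  refine tendsto_setIntegral_peak_smul_of_integrableOn_of_tendsto measurableSet_Ioo
    measurableSet_Ioo subset_rfl self_mem_nhdsWithin measure_Ioo_lt_top.ne
    (.of_forall fun r τ hτ ↦ erlangKernel.nonneg r (sub_nonneg.2 hτ.2.le)) ?_ ?_
    (.of_forall fun r ↦ Continuous.aestronglyMeasurable (by fun_prop))
    ((intervalIntegrable_iff_integrableOn_Ioo_of_le hat.le).1 hg)
    (hlim.mono_left (nhdsWithin_mono _ Ioo_subset_Iio_self))
  · intro u hu htu
    obtain ⟨ε, hε, hball⟩ := Metric.isOpen_iff.1 hu t htu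
    refine ((erlangKernel.tendstoUniformlyOn_Icc hε (t - a)).comp (t - ·)).mono ?_
    rintro τ ⟨hτ, hτu⟩
    have hdist : ε ≤ dist τ t := not_lt.1 fun h ↦ hτu (hball h)
    rw [dist_comm, dist_eq, abs_of_pos (sub_pos.2 hτ.2)] at hdist
    exact ⟨hdist, sub_le_sub_left hτ.1.le t⟩
  · refine (erlangKernel.tendsto_integral (sub_pos.2 hat)).congr fun r ↦ ?_
    rw [← integral_Ioc_eq_integral_Ioo, ← integral_of_le hat.le, integral_comp_sub_left, sub_self]

variable {f f' : ℝ → E}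

theorem smul_integral_exp_smul_deriv_eq (r : ℝ) (hat : a ≤ t) (hf : ContinuousOn f (Icc a t))
    (hderiv : ∀ τ ∈ Ioo a t, HasDerivAt f (f' τ) τ) (hint : IntervalIntegrable f' volume a t) :
    r • ∫ τ in a..t, exp (-(r * (t - τ))) • f' τ =
      (r * exp (-(r * (t - a)))) • (f t - f a) +
        ∫ τ in a..t, erlangKernel r (t - τ) • slope f t τ := by
  have hexp (τ : ℝ) : HasDerivAt (fun τ ↦ r * exp (-(r * (t - τ))))
      (r ^ 2 * exp (-(r * (t - τ)))) τ := by
    refine ((((hasDerivAt_id' τ).const_sub t).const_mul r).fun_neg.exp.const_mul r).congr_deriv ?_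
    ring
  have hparts := integral_smul_deriv_eq_deriv_smul_of_hasDerivAt (a := a) (b := t)
    (v := fun τ ↦ f τ - f t) (v' := f') (fun τ _ ↦ (hexp τ).continuousAt.continuousWithinAt)
    (by simpa only [uIcc_of_le hat] using hf.fun_sub continuousOn_const) (fun τ _ ↦ hexp τ)
    (by simpa only [min_eq_left hat, max_eq_right hat] using fun τ hτ ↦ (hderiv τ hτ).sub_const _)
    (Continuous.intervalIntegrable (by fun_prop) _ _) hint
  have hslope (τ : ℝ) : erlangKernel r (t - τ) • slope f t τ =
      -((r ^ 2 * exp (-(r * (t - τ)))) • (f τ - f t)) := by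
    rw [← vsub_eq_sub (f τ), ← sub_smul_slope, smul_smul, ← neg_smul]
    unfold erlangKernel
    congr 1
    ring
  simp only [hslope, intervalIntegral.integral_neg, ← intervalIntegral.integral_smul, smul_smul]
  rw [hparts, sub_self (f t), smul_zero, zero_sub, ← smul_neg, neg_sub, sub_eq_add_neg]

theorem tendsto_smul_integral_exp_smul_deriv {c : E} (hat : a < t) (hf : ContinuousOn f (Icc a t))
    (hderiv : ∀ τ ∈ Ioo a t, HasDerivAt f (f' τ) τ) (hint : IntervalIntegrable f' volume a t)
    (hc : HasDerivWithinAt f c (Iio t) t) :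
    Tendsto (fun r : ℝ ↦ r • ∫ τ in a..t, exp (-(r * (t - τ))) • f' τ) atTop (𝓝 c) := by
  have hboundary : Tendsto (fun r : ℝ ↦ (r * exp (-(r * (t - a)))) • (f t - f a)) atTop (𝓝 0) := by
    simpa using
      (tendsto_pow_mul_exp_neg_mul_atTop_nhds_zero 1 (sub_pos.2 hat)).smul_const (f t - f a)
  have hpeak := tendsto_integral_erlangKernel_smul hat
    (intervalIntegrable_slope_of_hasDerivWithinAt hat.le hf hc)
    ((hasDerivWithinAt_iff_tendsto_slope' self_notMem_Iio).1 hc)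
  simpa only [smul_integral_exp_smul_deriv_eq _ hat.le hf hderiv hint, zero_add]
    using hboundary.add hpeak

theorem cf_deriv_tendsto_deriv_general {c : E} (hat : a < t) (hf : ContinuousOn f (Icc a t))
    (hderiv : ∀ τ ∈ Ioo a t, HasDerivAt f (f' τ) τ) (hint : IntervalIntegrable f' volume a t)
    (hc : HasDerivWithinAt f c (Iio t) t) :
    Tendsto (fun α : ℝ ↦ (1 / (1 - α)) • ∫ τ in a..t, exp ((α / (α - 1)) * (t - τ)) • f' τ)
      (𝓝[<] 1) (𝓝 c) := by
  have hinv : Tendsto (fun α : ℝ ↦ α⁻¹) (𝓝[<] 1) (𝓝 1) := by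
    simpa using (tendsto_inv₀ (one_ne_zero (α := ℝ))).mono_left nhdsWithin_le_nhds
  have hlim := hinv.smul ((tendsto_smul_integral_exp_smul_deriv hat hf hderiv hint hc).comp
    tendsto_div_one_sub_nhdsLT_one)
  rw [one_smul] at hlim
  refine hlim.congr' ?_
  filter_upwards [nhdsWithin_le_nhds (lt_mem_nhds zero_lt_one)] with α hα
  have hscale : α⁻¹ * (α / (1 - α)) = 1 / (1 - α) := by
    rw [← mul_div_assoc, inv_mul_cancel₀ hα.ne']
  have hrate : -(α / (1 - α)) = α / (α - 1) := by
    rw [← div_neg, neg_sub]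
  simp only [Function.comp_apply, smul_smul, hscale, ← neg_mul, hrate]

end VectorValued

/-- As the order `α` tends to `1` from the left, the left-sided Caputo–Fabrizio
fractional derivative of a `C¹` function `f` on `[a, t]` tends to the ordinary
derivative `f'(t)`. -/
theorem cf_deriv_tendsto_deriv (a t : ℝ) (hat : a < t) (f : ℝ → ℝ)
    (hf : ContDiffOn ℝ 1 f (Set.Icc a t)) :
    Tendsto
      (fun α : ℝ => (1 / (1 - α)) *
        ∫ τ in a..t, derivWithin f (Set.Icc a t) τ * Real.exp ((α / (α - 1)) * (t - τ)))
      (nhdsWithin 1 (Set.Iio 1))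
      (nhds (derivWithin f (Set.Icc a t) t)) := by
  have hderiv (τ : ℝ) (hτ : τ ∈ Icc a t) :
      HasDerivWithinAt f (derivWithin f (Icc a t) τ) (Icc a t) τ :=
    (hf.differentiableOn one_ne_zero τ hτ).hasDerivWithinAt
  have hint : IntervalIntegrable (derivWithin f (Icc a t)) volume a t :=
    (hf.continuousOn_derivWithin (uniqueDiffOn_Icc hat) le_rfl).intervalIntegrable_of_Icc hat.le
  simpa only [smul_eq_mul, mul_comm (Real.exp _)] using
    cf_deriv_tendsto_deriv_general hat hf.continuousOn
      (fun τ hτ ↦ (hderiv τ (Ioo_subset_Icc_self hτ)).hasDerivAt (Icc_mem_nhds hτ.1 hτ.2)) hint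
      ((hderiv t (right_mem_Icc.2 hat.le)).mono_of_mem_nhdsWithin (Icc_mem_nhdsLT hat))
end

section
/- Let α ∈ (0,1) and let f : [0,∞) → ℝ be continuously differentiable with both f and f′ bounded on [0,∞). Then for every real z > 0, the Laplace transform of the Caputo–Fabrizio fractional derivative of f satisfies ∫_0^∞ e^{−zt} · [(1/(1−α)) ∫_0^t f′(τ) · exp((α/(α−1))·(t−τ)) dτ] dt = (z·F(z) − f(0)) / ((1−α)z + α), where F(z) = ∫_0^∞ e^{−zt} f(t) dt. -/
open MeasureTheory intervalIntegral Real Set Filter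

/-!
With `c = α / (α - 1)`, integration by parts moves the derivative in `∫₀ᵗ e^{c(t-τ)} f'(τ) dτ` onto
the kernel, leaving `f(t) - e^{ct} f(0) + c (e^{c·} * f)(t)`. The convolution theorem then gives the
transform `F - f(0) / (z - c) + c F / (z - c) = (z F - f(0)) / (z - c)`, and
`(1 - α) (z - c) = (1 - α) z + α`.
-/

variable {E E' G : Type*} [NormedAddCommGroup E] [NormedSpace ℝ E]
  [NormedAddCommGroup E'] [NormedSpace ℝ E'] [NormedAddCommGroup G] [NormedSpace ℝ G]

/-- The Laplace integral of `f` at the real point `z` converges absolutely and has the value `F`.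
Only the values of `f` on `(0, ∞)` enter. -/
def HasLaplaceTransform (f : ℝ → E) (z : ℝ) (F : E) : Prop :=
  IntegrableOn (fun t ↦ exp (-z * t) • f t) (Ioi 0) ∧ ∫ t in Ioi 0, exp (-z * t) • f t = F

/-- The Caputo–Fabrizio fractional derivative of order `α` based at `0`, normalized by `M(α) = 1`.
The derivative is the one-sided `derivWithin` on `[0, ∞)`, as `f` is of interest only there. -/
noncomputable def caputoFabrizioDeriv (α : ℝ) (f : ℝ → E) (t : ℝ) : E :=
  (1 / (1 - α)) • ∫ τ in (0 : ℝ)..t, exp (α / (α - 1) * (t - τ)) • derivWithin f (Ici 0) τ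

theorem integrableOn_exp_neg_mul_smul_of_bounded {f : ℝ → E} {M z : ℝ} (hz : 0 < z)
    (hf : AEStronglyMeasurable f (volume.restrict (Ioi 0))) (hM : ∀ t, 0 < t → ‖f t‖ ≤ M) :
    IntegrableOn (fun t ↦ exp (-z * t) • f t) (Ioi 0) :=
  (integrableOn_exp_mul_Ioi (neg_lt_zero.mpr hz) 0).smul_bdd M hf
    ((ae_restrict_iff' measurableSet_Ioi).mpr (.of_forall hM))

namespace HasLaplaceTransform

variable {f g : ℝ → E} {z c : ℝ} {F F₁ : E}

theorem congr (hf : HasLaplaceTransform f z F) (hfg : EqOn f g (Ioi 0)) :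
    HasLaplaceTransform g z F := by
  have hexp : EqOn (fun t ↦ exp (-z * t) • f t) (fun t ↦ exp (-z * t) • g t) (Ioi 0) :=
    fun t ht ↦ congrArg (exp (-z * t) • ·) (hfg ht)
  exact ⟨hf.1.congr_fun hexp measurableSet_Ioi,
    (setIntegral_congr_fun measurableSet_Ioi hexp).symm.trans hf.2⟩

theorem add (hf : HasLaplaceTransform f z F) (hg : HasLaplaceTransform g z F₁) :
    HasLaplaceTransform (fun t ↦ f t + g t) z (F + F₁) := by
  simp only [HasLaplaceTransform, smul_add]
  exact ⟨hf.1.add hg.1, by rw [integral_add hf.1 hg.1, hf.2, hg.2]⟩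

theorem const_smul (hf : HasLaplaceTransform f z F) (a : ℝ) :
    HasLaplaceTransform (fun t ↦ a • f t) z (a • F) := by
  simp only [HasLaplaceTransform, smul_comm _ a]
  exact ⟨hf.1.smul a, by rw [MeasureTheory.integral_smul, hf.2]⟩

theorem sub (hf : HasLaplaceTransform f z F) (hg : HasLaplaceTransform g z F₁) :
    HasLaplaceTransform (fun t ↦ f t - g t) z (F - F₁) := by
  simpa only [neg_one_smul, ← sub_eq_add_neg] using hf.add (hg.const_smul (-1))

theorem exp_mul (hc : c < z) : HasLaplaceTransform (fun t ↦ exp (c * t)) z (z - c)⁻¹ := by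
  have hneg : c - z < 0 := sub_neg.mpr hc
  have hexp (t : ℝ) : exp (-z * t) • exp (c * t) = exp ((c - z) * t) := by
    rw [smul_eq_mul, ← exp_add]
    ring_nf
  simp only [HasLaplaceTransform, hexp]
  refine ⟨integrableOn_exp_mul_Ioi hneg 0, ?_⟩
  rw [integral_exp_mul_Ioi hneg, mul_zero, exp_zero, neg_div, ← div_neg, neg_sub, one_div]

theorem smul_const [CompleteSpace E] {k : ℝ → ℝ} {K : ℝ} (hk : HasLaplaceTransform k z K)
    (x : E) :
    HasLaplaceTransform (fun t ↦ k t • x) z (K • x) := by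
  simp only [HasLaplaceTransform, ← smul_assoc]
  exact ⟨hk.1.smul_const x, by rw [_root_.integral_smul_const, hk.2]⟩

theorem convolution [CompleteSpace E] [CompleteSpace E'] [CompleteSpace G] {k : ℝ → E'} {K : E'}
    (hf : HasLaplaceTransform f z F) (hk : HasLaplaceTransform k z K) (L : E →L[ℝ] E' →L[ℝ] G) :
    HasLaplaceTransform (fun t ↦ ∫ τ in (0 : ℝ)..t, L (f τ) (k (t - τ))) z (L F K) := by
  have hweight (t : ℝ) : exp (-z * t) • ∫ τ in (0 : ℝ)..t, L (f τ) (k (t - τ)) =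
      ∫ τ in (0 : ℝ)..t, L (exp (-z * τ) • f τ) (exp (-z * (t - τ)) • k (t - τ)) := by
    rw [← intervalIntegral.integral_smul]
    refine integral_congr fun τ _ ↦ ?_
    have hsplit : exp (-z * t) = exp (-z * (t - τ)) * exp (-z * τ) := by
      rw [← exp_add]
      ring_nf
    simp only [map_smul, smul_apply, mul_smul, hsplit]
  simp only [HasLaplaceTransform, hweight]
  constructor
  · exact (integrable_indicator_iff measurableSet_Ioi).mp (integrable_posConvolution hf.1 hk.1 L)
  · rw [integral_posConvolution hf.1 hk.1 L, hf.2, hk.2]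

theorem convolution_exp [CompleteSpace E] (hf : HasLaplaceTransform f z F) (hc : c < z) :
    HasLaplaceTransform (fun t ↦ ∫ τ in (0 : ℝ)..t, exp (c * (t - τ)) • f τ) z ((z - c)⁻¹ • F) :=
  hf.convolution (exp_mul hc) (ContinuousLinearMap.lsmul ℝ ℝ).flip

end HasLaplaceTransform

theorem integral_exp_smul_deriv [CompleteSpace E] {f f' : ℝ → E} {a b : ℝ} (c : ℝ)
    (hf : ContinuousOn f (uIcc a b)) (hff' : ∀ x ∈ Ioo (min a b) (max a b), HasDerivAt f (f' x) x)
    (hf' : IntervalIntegrable f' volume a b) :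
    ∫ τ in a..b, exp (c * (b - τ)) • f' τ =
      f b - exp (c * (b - a)) • f a + c • ∫ τ in a..b, exp (c * (b - τ)) • f τ := by
  have hkernel (τ : ℝ) :
      HasDerivAt (fun τ ↦ exp (c * (b - τ))) (-c * exp (c * (b - τ))) τ := by
    convert! (((hasDerivAt_id τ).const_sub b).const_mul c).exp using 1
    simp [mul_comm]
  rw [integral_smul_deriv_eq_deriv_smul_of_hasDerivAt (by fun_prop) hf (fun τ _ ↦ hkernel τ) hff'
    ((by fun_prop : Continuous _).intervalIntegrable a b) hf']
  simp only [sub_self, mul_zero, exp_zero, one_smul, mul_smul, neg_smul,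
    intervalIntegral.integral_neg, intervalIntegral.integral_smul, sub_neg_eq_add]

theorem caputoFabrizioDeriv_eq [CompleteSpace E] {f : ℝ → E} {t : ℝ} (α : ℝ) (ht : 0 ≤ t)
    (hcont : ContinuousOn f (Ici 0)) (hdiff : DifferentiableOn ℝ f (Ioi 0))
    (hint : LocallyIntegrableOn (derivWithin f (Ici 0)) (Ici 0)) :
    caputoFabrizioDeriv α f t =
      (1 / (1 - α)) • (f t - exp (α / (α - 1) * t) • f 0 +
        (α / (α - 1)) • ∫ τ in (0 : ℝ)..t, exp (α / (α - 1) * (t - τ)) • f τ) := by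
  have hIcc : uIcc 0 t ⊆ Ici 0 := by
    rw [uIcc_of_le ht]
    exact Icc_subset_Ici_self
  have hderiv : ∀ τ ∈ Ioo (min 0 t) (max 0 t), HasDerivAt f (derivWithin f (Ici 0) τ) τ := by
    intro τ hτ
    have hpos : 0 < τ := by simpa only [min_eq_left ht] using hτ.1
    rw [derivWithin_of_mem_nhds (Ici_mem_nhds hpos)]
    exact (hdiff.differentiableAt (Ioi_mem_nhds hpos)).hasDerivAt
  have hderiv_int : IntervalIntegrable (derivWithin f (Ici 0)) volume 0 t :=
    (hint.integrableOn_compact_subset hIcc isCompact_uIcc).intervalIntegrable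
  rw [caputoFabrizioDeriv, integral_exp_smul_deriv _ (hcont.mono hIcc) hderiv hderiv_int, sub_zero]

theorem laplace_cf_deriv_general [CompleteSpace E] {α z : ℝ} {f : ℝ → E} {F : E} (hα : α ≠ 1)
    (hz : α / (α - 1) < z) (hcont : ContinuousOn f (Ici 0)) (hdiff : DifferentiableOn ℝ f (Ioi 0))
    (hint : LocallyIntegrableOn (derivWithin f (Ici 0)) (Ici 0)) (hF : HasLaplaceTransform f z F) :
    HasLaplaceTransform (caputoFabrizioDeriv α f) z
      (((1 - α) * z + α)⁻¹ • (z • F - f 0)) := by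
  have hα' : 1 - α ≠ 0 := sub_ne_zero.mpr hα.symm
  set c := α / (α - 1) with hc
  have hparts : HasLaplaceTransform (caputoFabrizioDeriv α f) z
      ((1 / (1 - α)) • (F - (z - c)⁻¹ • f 0 + c • (z - c)⁻¹ • F)) :=
    (((hF.sub ((HasLaplaceTransform.exp_mul hz).smul_const (f 0))).add
      ((hF.convolution_exp hz).const_smul c)).const_smul (1 / (1 - α))).congr
      fun t ht ↦ (caputoFabrizioDeriv_eq α (le_of_lt ht) hcont hdiff hint).symm
  have hzc : z - c ≠ 0 := (sub_pos.mpr hz).ne'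
  have hden : (1 - α) * z + α = (1 - α) * (z - c) := by
    have : α - 1 ≠ 0 := sub_ne_zero.mpr hα
    rw [hc]
    field_simp
    ring
  convert! hparts using 1
  rw [hden]
  match_scalars <;> field_simp
  ring

/-- Laplace transform of the Caputo–Fabrizio fractional derivative:
for `α ∈ (0,1)`, a `C¹` function `f` on `[0,∞)` with `f` and `f'` bounded, and `z > 0`,
`ℒ{CF Δ^(α) f}(z) = (z F(z) - f 0) / ((1-α) z + α)` where `F` is the Laplace transform of `f`. -/
theorem laplace_cf_deriv (α : ℝ) (hα : α ∈ Set.Ioo (0 : ℝ) 1) (f : ℝ → ℝ)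
    (hf : ContDiffOn ℝ 1 f (Set.Ici 0))
    (hfb : ∃ M : ℝ, ∀ t : ℝ, 0 ≤ t → |f t| ≤ M)
    (hfb' : ∃ M : ℝ, ∀ t : ℝ, 0 ≤ t → |derivWithin f (Set.Ici 0) t| ≤ M)
    (z : ℝ) (hz : 0 < z) :
    ∫ t in Set.Ioi (0 : ℝ), Real.exp (-z * t) *
        ((1 / (1 - α)) *
          ∫ τ in (0 : ℝ)..t, derivWithin f (Set.Ici 0) τ * Real.exp ((α / (α - 1)) * (t - τ)))
      = (z * (∫ t in Set.Ioi (0 : ℝ), Real.exp (-z * t) * f t) - f 0) / ((1 - α) * z + α) := by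
  obtain ⟨M, hM⟩ := hfb
  have hz' : α / (α - 1) < z :=
    (div_neg_of_pos_of_neg hα.1 (sub_neg.mpr hα.2)).trans hz
  have hconv : IntegrableOn (fun t ↦ exp (-z * t) • f t) (Ioi 0) :=
    integrableOn_exp_neg_mul_smul_of_bounded hz
      ((hf.continuousOn.mono Ioi_subset_Ici_self).aestronglyMeasurable measurableSet_Ioi)
      fun t ht ↦ hM t ht.le
  have hderiv : LocallyIntegrableOn (derivWithin f (Ici 0)) (Ici 0) :=
    (hf.continuousOn_derivWithin (uniqueDiffOn_Ici 0) le_rfl).locallyIntegrableOn measurableSet_Ici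
  simpa only [caputoFabrizioDeriv, smul_eq_mul, div_eq_inv_mul, mul_comm] using
    (laplace_cf_deriv_general hα.2.ne hz' hf.continuousOn
      ((hf.differentiableOn one_ne_zero).mono Ioi_subset_Ici_self) hderiv ⟨hconv, rfl⟩).2
end

section
/- Let α ∈ (0,1) and let x : [0,∞) → ℝ be continuously differentiable. If (1/(1−α)) ∫_0^t x′(τ) · exp((α/(α−1))·(t−τ)) dτ = 0 for all t ≥ 0, then x is constant: x(t) = x(0) for all t ≥ 0. -/
open MeasureTheory intervalIntegral Real Set Filter

/-!
The exponential kernel is separable: writing `c = α / (α - 1)`, the vanishing of the derivative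
at `t` says that `τ ↦ exp (-c τ) x'(τ)` has integral zero up to `t`. By Lebesgue's differentiation
theorem a function all of whose integrals from a fixed base point vanish is zero almost everywhere;
hence so is `x'`, and `x`, being its primitive, is constant.
-/

section Integral

variable {E : Type*} [NormedAddCommGroup E] [NormedSpace ℝ E]

theorem integral_exp_mul_sub_smul (f : ℝ → E) (a c t : ℝ) :
    ∫ τ in a..t, exp (c * (t - τ)) • f τ = exp (c * t) • ∫ τ in a..t, exp (-(c * τ)) • f τ := by
  simp only [← intervalIntegral.integral_smul, smul_smul, ← exp_add, ← sub_eq_add_neg, mul_sub]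

variable [CompleteSpace E]

theorem ae_eq_zero_of_forall_integral_eq_zero {f : ℝ → E} {a b : ℝ}
    (hf : IntervalIntegrable f volume a b) (hint : ∀ t ∈ uIcc a b, ∫ τ in a..t, f τ = 0) :
    ∀ᵐ t, t ∈ uIcc a b → f t = 0 := by
  have ne_left : ∀ᵐ t : ℝ, t ≠ a := Measure.ae_ne volume a
  have ne_right : ∀ᵐ t : ℝ, t ≠ b := Measure.ae_ne volume b
  filter_upwards [hf.ae_hasDerivAt_integral, ne_left, ne_right] with t hderiv hta htb ht
  have uIcc_mem_nhds : uIcc a b ∈ nhds t := Icc_mem_nhds (by grind [uIcc]) (by grind [uIcc])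
  have primitive_eq_zero : (fun u => ∫ τ in a..u, f τ) =ᶠ[nhds t] fun _ => 0 :=
    eventually_of_mem uIcc_mem_nhds hint
  exact (hderiv ht a left_mem_uIcc).unique
    ((hasDerivAt_const t 0).congr_of_eventuallyEq primitive_eq_zero)

theorem ae_eq_zero_of_forall_integral_exp_smul_eq_zero {f : ℝ → E} {a b : ℝ} (c : ℝ)
    (hf : IntervalIntegrable f volume a b)
    (hint : ∀ t ∈ uIcc a b, ∫ τ in a..t, exp (c * (t - τ)) • f τ = 0) :
    ∀ᵐ t, t ∈ uIcc a b → f t = 0 := by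
  have weighted_integrable : IntervalIntegrable (fun τ => exp (-(c * τ)) • f τ) volume a b :=
    hf.continuousOn_smul (by fun_prop)
  have weighted_integral (t : ℝ) (ht : t ∈ uIcc a b) :
      ∫ τ in a..t, exp (-(c * τ)) • f τ = 0 := by
    simpa only [integral_exp_mul_sub_smul, smul_eq_zero_iff_right (exp_ne_zero _)] using hint t ht
  filter_upwards [ae_eq_zero_of_forall_integral_eq_zero weighted_integrable weighted_integral]
    with t weighted_eq_zero ht
  exact (smul_eq_zero_iff_right (exp_ne_zero _)).1 (weighted_eq_zero ht)

end Integral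

section DerivWithin

variable {E : Type*} [NormedAddCommGroup E] [NormedSpace ℝ E] {f : ℝ → E} {s : Set ℝ} {a b : ℝ}

theorem intervalIntegrable_derivWithin_of_contDiffOn (hf : ContDiffOn ℝ 1 f s)
    (hs : UniqueDiffOn ℝ s) (hab : uIcc a b ⊆ s) :
    IntervalIntegrable (derivWithin f s) volume a b :=
  ((hf.continuousOn_derivWithin hs le_rfl).mono hab).intervalIntegrable

theorem integral_derivWithin_of_contDiffOn [CompleteSpace E] (hf : ContDiffOn ℝ 1 f s)
    (hs : UniqueDiffOn ℝ s) (hab : uIcc a b ⊆ s) :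
    ∫ t in a..b, derivWithin f s t = f b - f a := by
  refine integral_eq_sub_of_hasDeriv_right (hf.continuousOn.mono hab) (fun t ht => ?_)
    (intervalIntegrable_derivWithin_of_contDiffOn hf hs hab)
  have s_mem_nhds : s ∈ nhds t := mem_of_superset (Icc_mem_nhds ht.1 ht.2) hab
  have hderiv := (hf.differentiableOn one_ne_zero t (mem_of_mem_nhds s_mem_nhds)).hasDerivWithinAt
  exact (hderiv.hasDerivAt s_mem_nhds).hasDerivWithinAt

end DerivWithin

/-- The hypotheses `hx'` and `hx` encode that `x` is locally absolutely continuous on the interval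
`s` with almost everywhere derivative `x'`. -/
theorem cf_deriv_zero_implies_const_general {E : Type*} [NormedAddCommGroup E] [NormedSpace ℝ E]
    [CompleteSpace E] {α : ℝ} (hα : α ≠ 1) {s : Set ℝ} (hs : s.OrdConnected) {a : ℝ} (ha : a ∈ s)
    {x x' : ℝ → E} (hx' : ∀ t ∈ s, IntervalIntegrable x' volume a t)
    (hx : ∀ t ∈ s, ∫ τ in a..t, x' τ = x t - x a)
    (h : ∀ t ∈ s, (1 / (1 - α)) • (∫ τ in a..t, exp ((α / (α - 1)) * (t - τ)) • x' τ) = 0) :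
    ∀ t ∈ s, x t = x a := by
  intro t ht
  have normalization_ne_zero : 1 / (1 - α) ≠ 0 := one_div_ne_zero (sub_ne_zero.2 hα.symm)
  have ae_eq_zero : ∀ᵐ τ, τ ∈ uIcc a t → x' τ = 0 :=
    ae_eq_zero_of_forall_integral_exp_smul_eq_zero _ (hx' t ht) fun u hu =>
      (smul_eq_zero_iff_right normalization_ne_zero).1 (h u (hs.uIcc_subset ha ht hu))
  have integral_eq_zero : ∫ τ in a..t, x' τ = 0 :=
    integral_zero_ae (ae_eq_zero.mono fun _ hτ hmem => hτ (uIoc_subset_uIcc hmem))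
  rw [← sub_eq_zero, ← hx t ht, integral_eq_zero]

/-- If the Caputo–Fabrizio fractional derivative of a `C¹` function `x` on `[0,∞)`
vanishes identically, then `x` is constant on `[0,∞)`. -/
theorem cf_deriv_zero_implies_const (α : ℝ) (hα : α ∈ Set.Ioo (0 : ℝ) 1) (x : ℝ → ℝ)
    (hx : ContDiffOn ℝ 1 x (Set.Ici 0))
    (h : ∀ t : ℝ, 0 ≤ t →
      (1 / (1 - α)) *
        (∫ τ in (0 : ℝ)..t, derivWithin x (Set.Ici 0) τ * Real.exp ((α / (α - 1)) * (t - τ)))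
      = 0) :
    ∀ t : ℝ, 0 ≤ t → x t = x 0 := by
  have subset_Ici (t : ℝ) (ht : 0 ≤ t) : uIcc 0 t ⊆ Ici 0 :=
    ordConnected_Ici.uIcc_subset self_mem_Ici ht
  exact cf_deriv_zero_implies_const_general hα.2.ne ordConnected_Ici self_mem_Ici
    (fun t ht => intervalIntegrable_derivWithin_of_contDiffOn hx (uniqueDiffOn_Ici 0)
      (subset_Ici t ht))
    (fun t ht => integral_derivWithin_of_contDiffOn hx (uniqueDiffOn_Ici 0) (subset_Ici t ht))
    (by simpa only [mem_Ici, smul_eq_mul, mul_comm] using h)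
end

section
/- Let α ∈ (0,1), h > 0 with h > 2(1−α)/α, and λ ∈ ℝ with K := 1 − λ(1−α) ≠ 0. Then the stability parameter p := λα/K satisfies −2/h < p < 0 if and only if −2/(hα − 2(1−α)) < λ < 0. -/
/-!
With `a = α` and `b = 1 - α`, passing to reciprocals turns the Möbius relation
`p = lam a / (1 - lam b)` into the affine relation `lam⁻¹ = a p⁻¹ + b`, and an interval `(-2/d, 0)`
into the half-line below `-d/2`. The increasing map `x ↦ a x + b` carries the half-line below `-h/2`
onto the one below `-(h a - 2 b)/2`. When `h a > 2 b`, the latter is again the reciprocal of such an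
interval, with `d = h a - 2 b`.
-/

section

variable {𝕜 : Type*} [Field 𝕜]

theorem inv_eq_mul_inv_add_of_mul_one_sub_eq {a b lam p : 𝕜} (ha : a ≠ 0) (hlam : lam ≠ 0)
    (hp : p * (1 - lam * b) = lam * a) : lam⁻¹ = a * p⁻¹ + b := by
  have hp0 : p ≠ 0 := left_ne_zero_of_mul (hp ▸ mul_ne_zero hlam ha)
  field_simp
  linear_combination hp

variable [LinearOrder 𝕜] [IsStrictOrderedRing 𝕜]

theorem neg_div_lt_and_neg_iff_inv_lt {c d x : 𝕜} (hc : 0 < c) (hd : 0 < d) :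
    (-c / d < x ∧ x < 0) ↔ x⁻¹ < -d / c := by
  have hneg : -c / d < 0 := div_neg_of_neg_of_pos (neg_lt_zero.2 hc) hd
  calc
    (-c / d < x ∧ x < 0) ↔ x⁻¹ ∈ (Set.Ioo (-c / d) 0)⁻¹ := by
      rw [Set.inv_mem_inv, Set.mem_Ioo]
    _ ↔ x⁻¹ < (-c / d)⁻¹ := by rw [Set.inv_Ioo_0_right hneg, Set.mem_Iio]
    _ ↔ x⁻¹ < -d / c := by rw [inv_div, div_neg, neg_div]

theorem cf_stability_hZ_large_h_general {a b h lam p : 𝕜} (ha : 0 < a) (hh : 0 < h)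
    (hab : 2 * b < h * a) (hp : p * (1 - lam * b) = lam * a) :
    (-2 / h < p ∧ p < 0) ↔ (-2 / (h * a - 2 * b) < lam ∧ lam < 0) := by
  rcases eq_or_ne lam 0 with rfl | hlam
  · have hp0 : p = 0 := by simpa using hp
    simp only [hp0, lt_irrefl, and_false]
  · calc
      (-2 / h < p ∧ p < 0) ↔ p⁻¹ < -h / 2 := neg_div_lt_and_neg_iff_inv_lt two_pos hh
      _ ↔ a * p⁻¹ < a * (-h / 2) := (mul_lt_mul_iff_right₀ ha).symm
      _ ↔ a * p⁻¹ + b < a * (-h / 2) + b := (add_lt_add_iff_right b).symm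
      _ ↔ lam⁻¹ < -(h * a - 2 * b) / 2 := by
        rw [inv_eq_mul_inv_add_of_mul_one_sub_eq ha.ne' hlam hp,
          show a * (-h / 2) + b = -(h * a - 2 * b) / 2 by ring]
      _ ↔ (-2 / (h * a - 2 * b) < lam ∧ lam < 0) :=
        (neg_div_lt_and_neg_iff_inv_lt two_pos (sub_pos.2 hab)).symm

end

/-- Exponential stability condition for the Caputo–Fabrizio linear equation on `𝕋 = hℤ`
in the case `h > 2(1-α)/α`: with `K = 1 - λ(1-α) ≠ 0` and `p = λα/K`, one has
`-2/h < p < 0` if and only if `-2/(hα - 2(1-α)) < λ < 0`. -/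
theorem cf_stability_hZ_large_h (α h lam : ℝ) (hα : α ∈ Set.Ioo (0 : ℝ) 1)
    (hh : 0 < h) (hh' : h > 2 * (1 - α) / α)
    (K : ℝ) (hK : K = 1 - lam * (1 - α)) (hK0 : K ≠ 0)
    (p : ℝ) (hp : p = lam * α / K) :
    (-2 / h < p ∧ p < 0) ↔ (-2 / (h * α - 2 * (1 - α)) < lam ∧ lam < 0) := by
  exact cf_stability_hZ_large_h_general hα.1 hh ((div_lt_iff₀ hα.1).1 hh')
    (hK ▸ (eq_div_iff hK0).1 hp)
end

section
/- Let α ∈ (0,1), h > 0 with h < 2(1−α)/α, and λ ∈ ℝ with K := 1 − λ(1−α) ≠ 0. Then the stability parameter p := λα/K satisfies −2/h < p < 0 if and only if λ < 0 or λ > 2/(2(1−α) − hα). -/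
/-!
For `λ ≠ 0`, inverting `p = λα / (1 - λ(1-α))` gives `p⁻¹ = (λ⁻¹ - (1-α)) / α`, which is affine in
`λ⁻¹`. Inversion also turns `-2/h < p < 0` into the single inequality `p⁻¹ < -h/2`, so it amounts to
`λ⁻¹ < (2(1-α) - hα)/2`. For small `h` the right-hand side is positive, and its inverse is the
threshold for positive `λ`.
-/

section InvOrder

variable {𝕜 : Type*} [Field 𝕜] [LinearOrder 𝕜] [IsStrictOrderedRing 𝕜]

lemma ne_zero_and_inv_lt_iff_neg_or_inv_lt {c x : 𝕜} (hc : 0 < c) :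
    x ≠ 0 ∧ x⁻¹ < c ↔ x < 0 ∨ c⁻¹ < x := by
  rcases lt_trichotomy x 0 with hneg | rfl | hpos
  · exact iff_of_true ⟨hneg.ne, (inv_lt_zero.2 hneg).trans hc⟩ (.inl hneg)
  · simp [hc.le]
  · rw [and_iff_right hpos.ne', or_iff_right hpos.not_gt, inv_lt_comm₀ hpos hc]

lemma mem_Ioo_zero_iff_inv_lt_inv {a x : 𝕜} (ha : a < 0) :
    x ∈ Set.Ioo a 0 ↔ x⁻¹ < a⁻¹ := by
  rw [← Set.mem_Iio, ← Set.inv_Ioo_0_right ha, Set.inv_mem_inv]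

end InvOrder

section StabilityParam

variable {𝕜 : Type*} [Field 𝕜]

/-- The stability parameter `p(α) = λα / K(α)`, `K(α) = 1 - λ(1-α)`, of the Caputo–Fabrizio equation
`CF Δ^(α) x = λ x + u` with `u` constant: when `K(α) ≠ 0`, the equation is exponentially stable on a
time scale exactly when `p(α)` lies in its stability set, whose real points for `hℤ` form
`(-2/h, 0)`. -/
def cfStabilityParam (α lam : 𝕜) : 𝕜 :=
  lam * α / (1 - lam * (1 - α))

-- At `α = 0` and at `K(α) = 0` both sides are `0`, since division by zero gives `0`.
lemma inv_cfStabilityParam (α : 𝕜) {lam : 𝕜} (hlam : lam ≠ 0) :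
    (cfStabilityParam α lam)⁻¹ = (lam⁻¹ - (1 - α)) / α := by
  rw [cfStabilityParam, inv_div, ← div_div, sub_div, mul_div_cancel_left₀ _ hlam, one_div]

variable [LinearOrder 𝕜] [IsStrictOrderedRing 𝕜]

lemma cfStabilityParam_mem_Ioo_iff {α h lam : 𝕜} (hα : 0 < α) (hh : 0 < h) :
    cfStabilityParam α lam ∈ Set.Ioo (-2 / h) 0 ↔
      lam ≠ 0 ∧ lam⁻¹ < (2 * (1 - α) - h * α) / 2 := by
  rcases eq_or_ne lam 0 with rfl | hlam
  · simp [cfStabilityParam]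
  · have hbound : -2 / h < 0 := div_neg_of_neg_of_pos (by norm_num) hh
    have hthreshold : (1 - α) + h / -2 * α = (2 * (1 - α) - h * α) / 2 := by ring
    rw [mem_Ioo_zero_iff_inv_lt_inv hbound, inv_cfStabilityParam α hlam, inv_div,
      div_lt_iff₀ hα, sub_lt_iff_lt_add', hthreshold, and_iff_right hlam]

end StabilityParam

/-- Exponential stability condition for the Caputo–Fabrizio linear equation on `𝕋 = hℤ`
in the case `h < 2(1-α)/α`: with `K = 1 - λ(1-α) ≠ 0` and `p = λα/K`, one has
`-2/h < p < 0` if and only if `λ < 0` or `λ > 2/(2(1-α) - hα)`. -/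
theorem cf_stability_hZ_small_h (α h lam : ℝ) (hα : α ∈ Set.Ioo (0 : ℝ) 1)
    (hh : 0 < h) (hh' : h < 2 * (1 - α) / α)
    (K : ℝ) (hK : K = 1 - lam * (1 - α)) (hK0 : K ≠ 0)
    (p : ℝ) (hp : p = lam * α / K) :
    (-2 / h < p ∧ p < 0) ↔ (lam < 0 ∨ lam > 2 / (2 * (1 - α) - h * α)) := by
  have hparam : p = cfStabilityParam α lam := by rw [hp, hK, cfStabilityParam]
  have hpos : 0 < 2 * (1 - α) - h * α := sub_pos.2 ((lt_div_iff₀ hα.1).1 hh')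
  rw [← Set.mem_Ioo, hparam, cfStabilityParam_mem_Ioo_iff hα.1 hh,
    ne_zero_and_inv_lt_iff_neg_or_inv_lt (half_pos hpos), inv_div, gt_iff_lt]
end

section
/- Let α ∈ (0,1), h > 0, λ ∈ ℝ with 1 − λ(1−α) ≠ 0, x₀ ∈ ℝ, and u : ℕ → ℝ. Then there exists a unique sequence x : ℕ → ℝ with x(0) = x₀ such that for every k ≥ 1, (1/(1−α)) · Σ_{j=0}^{k−1} (x(j+1) − x(j)) · (1 + h·α/(α−1))^{k−1−j} = λ·x(k) + u(k). -/
open Finset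

/-! Write `c = 1 / (1 - α)`, `q = 1 + h * (α / (α - 1))` and `d j = c * (x (j + 1) - x j)`. The
memory term `S k = ∑ j < k, d j * q ^ (k - 1 - j)` satisfies `S (k + 1) = S k * q + d k`, and the
equation itself expresses `S k` through `x k`. So the memory can be eliminated: what is left is an
implicit one-step recursion in which the new unknown `x (k + 1)` has coefficient `c - lam`. -/

theorem existsUnique_seq_of_forall_existsUnique_succ {X : Type*} {P : ℕ → X → X → Prop}
    (hP : ∀ k y, ∃! z, P k y z) (x₀ : X) :
    ∃! x : ℕ → X, x 0 = x₀ ∧ ∀ k, P k (x k) (x (k + 1)) := by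
  choose next next_spec next_unique using hP
  refine ⟨fun k => Nat.rec x₀ next k, ⟨rfl, fun k => next_spec k _⟩, ?_⟩
  rintro x ⟨hx₀, hx⟩
  funext k
  induction k with
  | zero => exact hx₀
  | succ k ih => exact (next_unique k _ _ (hx k)).trans (congrArg (next k) ih)

section Semiring

variable {R : Type*} [Semiring R]

theorem sum_range_succ_mul_pow_sub (q : R) (d : ℕ → R) (k : ℕ) :
    ∑ j ∈ range (k + 1), d j * q ^ (k - j) =
      (∑ j ∈ range k, d j * q ^ (k - 1 - j)) * q + d k := by
  have hshift : ∀ j ∈ range k, d j * q ^ (k - j) = d j * q ^ (k - 1 - j) * q := by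
    intro j hj
    have hjk : j < k := mem_range.mp hj
    rw [show k - j = k - 1 - j + 1 by omega, pow_succ, mul_assoc]
  rw [sum_range_succ, sum_congr rfl hshift, sum_mul, Nat.sub_self, pow_zero, mul_one]

theorem forall_sum_range_mul_pow_sub_eq_iff (q : R) (d g : ℕ → R) :
    (∀ k, ∑ j ∈ range k, d j * q ^ (k - 1 - j) = g k) ↔
      g 0 = 0 ∧ ∀ k, g (k + 1) = g k * q + d k := by
  constructor
  · intro hg
    refine ⟨(hg 0).symm, fun k => ?_⟩
    rw [← hg, ← hg, Nat.add_sub_cancel, sum_range_succ_mul_pow_sub]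
  · rintro ⟨hg₀, hg⟩ k
    induction k with
    | zero => exact hg₀.symm
    | succ k ih => rw [Nat.add_sub_cancel, sum_range_succ_mul_pow_sub, ih, hg]

end Semiring

section Ring

variable {R : Type*} [Ring R] {c lam : R}

theorem existsUnique_mul_add_eq_add_mul_sub (hc : IsUnit (c - lam)) (y a b : R) :
    ∃! z, lam * z + a = b + c * (z - y) := by
  have hiff (z : R) : (c - lam) * z = a - b + c * y ↔ lam * z + a = b + c * (z - y) := by
    have hsub : (c - lam) * z - (a - b + c * y) = b + c * (z - y) - (lam * z + a) := by
      noncomm_ring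
    rw [← sub_eq_zero, hsub, sub_eq_zero, eq_comm]
  exact (existsUnique_congr hiff).mp
    ((IsUnit.isUnit_iff_mulLeft_bijective.mp hc).existsUnique (a - b + c * y))

theorem existsUnique_forall_mul_sum_eq_of_add_eq_zero (q : R) (hc : IsUnit (c - lam)) {x₀ : R}
    {u : ℕ → R} (hu : lam * x₀ + u 0 = 0) :
    ∃! x : ℕ → R, x 0 = x₀ ∧
      ∀ k, c * ∑ j ∈ range k, (x (j + 1) - x j) * q ^ (k - 1 - j) = lam * x k + u k := by
  refine (existsUnique_congr fun x => and_congr_right fun hx₀ => ?_).mpr <|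
    existsUnique_seq_of_forall_existsUnique_succ
      (fun k y => existsUnique_mul_add_eq_add_mul_sub hc y (u (k + 1)) ((lam * y + u k) * q)) x₀
  have hconsistent : lam * x 0 + u 0 = 0 := by rw [hx₀, hu]
  simp only [mul_sum, ← mul_assoc]
  rw [forall_sum_range_mul_pow_sub_eq_iff q _ fun k => lam * x k + u k]
  exact and_iff_right hconsistent

theorem cf_linear_hZ_exists_unique_general (q : R) (hc : IsUnit (c - lam)) (x₀ : R)
    (u : ℕ → R) :
    ∃! x : ℕ → R, x 0 = x₀ ∧
      ∀ k, 1 ≤ k →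
        c * ∑ j ∈ range k, (x (j + 1) - x j) * q ^ (k - 1 - j) = lam * x k + u k := by
  -- The equation never reads `u 0`, so it may be chosen to make the equation hold at `k = 0` too.
  let v : ℕ → R := Function.update u 0 (-(lam * x₀))
  have hv₀ : lam * x₀ + v 0 = 0 := by simp [v]
  have hv {k : ℕ} (hk : 1 ≤ k) : v k = u k := Function.update_of_ne (by omega) _ _
  refine (existsUnique_congr fun x => and_congr_right fun hx₀ => ?_).mpr <|
    existsUnique_forall_mul_sum_eq_of_add_eq_zero q hc hv₀
  constructor
  · intro hx k
    rcases k.eq_zero_or_pos with rfl | hk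
    · simp [hx₀, hv₀]
    · rw [hx k hk, hv hk]
  · intro hx k hk
    rw [hx k, hv hk]

end Ring

/-- Existence and uniqueness of solutions to the linear Caputo–Fabrizio equation on the
time scale `𝕋 = hℤ`: there is a unique sequence `x` with `x 0 = x₀` satisfying
`(1/(1-α)) Σ_{j=0}^{k-1} (x(j+1) - x(j)) (1 + h α/(α-1))^{k-1-j} = λ x(k) + u(k)`
for every `k ≥ 1`. -/
theorem cf_linear_hZ_exists_unique (α h lam : ℝ) (hα : α ∈ Set.Ioo (0 : ℝ) 1)
    (hh : 0 < h) (hK : 1 - lam * (1 - α) ≠ 0) (x₀ : ℝ) (u : ℕ → ℝ) :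
    ∃! x : ℕ → ℝ, x 0 = x₀ ∧
      ∀ k : ℕ, 1 ≤ k →
        (1 / (1 - α)) *
          (∑ j ∈ Finset.range k, (x (j + 1) - x j) * (1 + h * (α / (α - 1))) ^ (k - 1 - j))
        = lam * x k + u k := by
  have hα' : 1 - α ≠ 0 := sub_ne_zero.mpr hα.2.ne'
  have hsub : 1 / (1 - α) - lam = (1 - lam * (1 - α)) / (1 - α) := by field_simp
  exact cf_linear_hZ_exists_unique_general _ (.mk0 _ (hsub ▸ div_ne_zero hK hα')) x₀ u
end

section
/- Let α ∈ (0,1), h > 0, x₀ ∈ ℝ, and let u : ℕ → ℝ satisfy u(0) = 0. Define x : ℕ → ℝ by x(k) = x₀ + (1−α)·u(k) + α·h·Σ_{j=0}^{k−1} u(j). Then x(0) = x₀ and for every k ≥ 0, (1/(1−α)) · Σ_{j=0}^{k−1} (x(j+1) − x(j)) · (1 + h·α/(α−1))^{k−1−j} = u(k). -/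
open Finset

/-!
Write `q = 1 + h α / (α - 1)`. Since `(1 - α) q = 1 - α - α h`, the fractional integral `x` of `u`
has differences `x (k + 1) - x k = (1 - α) (u (k + 1) - q u k)`. Weighted by `q ^ (k - 1 - j)`,
the differences `u (j + 1) - q u j` telescope to `u k - q ^ k u 0`.
-/

theorem sum_range_pow_smul_sub_smul {R E : Type*} [Semiring R] [AddCommGroup E] [Module R E]
    (q : R) (u : ℕ → E) (k : ℕ) :
    ∑ j ∈ range k, q ^ (k - 1 - j) • (u (j + 1) - q • u j) = u k - q ^ k • u 0 := by
  calc
    ∑ j ∈ range k, q ^ (k - 1 - j) • (u (j + 1) - q • u j)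
      = ∑ j ∈ range k, (q ^ (k - (j + 1)) • u (j + 1) - q ^ (k - j) • u j) := by
        refine sum_congr rfl fun j hj => ?_
        have hjk : j < k := mem_range.1 hj
        have hpred : k - 1 - j = k - (j + 1) := by lia
        have hsucc : k - j = k - (j + 1) + 1 := by lia
        rw [hpred, hsucc, pow_succ, smul_sub, mul_smul]
    _ = q ^ (k - k) • u k - q ^ (k - 0) • u 0 := sum_range_sub (fun j => q ^ (k - j) • u j) k
    _ = u k - q ^ k • u 0 := by rw [Nat.sub_self, pow_zero, one_smul, Nat.sub_zero]

section CaputoFabrizio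

variable {K E : Type*} [Field K] [AddCommGroup E] [Module K E]

/-- The Caputo–Fabrizio fractional delta derivative of order `α` on `hℤ`, based at `0` and with
normalization `M(α) = 1`; the argument `k` stands for the point `k h`. -/
def caputoFabrizioDelta (α h : K) (x : ℕ → E) (k : ℕ) : E :=
  (1 / (1 - α)) • ∑ j ∈ range k, (1 + h * (α / (α - 1))) ^ (k - 1 - j) • (x (j + 1) - x j)

/-- The Caputo–Fabrizio fractional delta-integral of order `α` on `hℤ`, based at `0` and with
normalization `M(α) = 1`; the argument `k` stands for the point `k h`. -/
def caputoFabrizioIntegral (α h : K) (u : ℕ → E) (k : ℕ) : E :=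
  (1 - α) • u k + (α * h) • ∑ j ∈ range k, u j

theorem caputoFabrizioDelta_const_add (α h : K) (c : E) (x : ℕ → E) (k : ℕ) :
    caputoFabrizioDelta α h (fun j => c + x j) k = caputoFabrizioDelta α h x k := by
  simp only [caputoFabrizioDelta, add_sub_add_left_eq_sub]

theorem caputoFabrizioIntegral_zero (α h : K) (u : ℕ → E) :
    caputoFabrizioIntegral α h u 0 = (1 - α) • u 0 := by
  rw [caputoFabrizioIntegral, sum_range_zero, smul_zero, add_zero]

theorem caputoFabrizioIntegral_succ_sub {α : K} (hα : α ≠ 1) (h : K) (u : ℕ → E) (k : ℕ) :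
    caputoFabrizioIntegral α h u (k + 1) - caputoFabrizioIntegral α h u k =
      (1 - α) • (u (k + 1) - (1 + h * (α / (α - 1))) • u k) := by
  have hα' : α - 1 ≠ 0 := sub_ne_zero.2 hα
  have hq : (1 - α) * (1 + h * (α / (α - 1))) = 1 - α - α * h := by
    field_simp
    ring
  rw [smul_sub, smul_smul, hq, caputoFabrizioIntegral, caputoFabrizioIntegral, sum_range_succ]
  module

theorem caputoFabrizioDelta_caputoFabrizioIntegral {α : K} (hα : α ≠ 1) (h : K) (u : ℕ → E)
    (k : ℕ) :
    caputoFabrizioDelta α h (caputoFabrizioIntegral α h u) k =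
      u k - (1 + h * (α / (α - 1))) ^ k • u 0 := by
  have hα' : 1 - α ≠ 0 := sub_ne_zero.2 hα.symm
  simp only [caputoFabrizioDelta, caputoFabrizioIntegral_succ_sub hα, smul_comm _ (1 - α)]
  rw [← smul_sum, sum_range_pow_smul_sub_smul, smul_smul, one_div_mul_cancel hα', one_smul]

theorem cf_integral_hZ_is_solution_general {α : K} (hα : α ≠ 1) (h : K) (x₀ : E) {u : ℕ → E}
    (hu0 : u 0 = 0) {x : ℕ → E} (hx : ∀ k, x k = x₀ + caputoFabrizioIntegral α h u k) :
    x 0 = x₀ ∧ ∀ k, caputoFabrizioDelta α h x k = u k := by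
  constructor
  · rw [hx, caputoFabrizioIntegral_zero, hu0, smul_zero, add_zero]
  · intro k
    rw [funext hx, caputoFabrizioDelta_const_add, caputoFabrizioDelta_caputoFabrizioIntegral hα,
      hu0, smul_zero, sub_zero]

end CaputoFabrizio

/-- The Caputo–Fabrizio fractional delta-integral on `𝕋 = hℤ` solves the equation
`(CF Δ^(α) x)(t) = u(t)`: if `u 0 = 0` and
`x(k) = x₀ + (1-α) u(k) + α h Σ_{j<k} u(j)`, then `x 0 = x₀` and
`(1/(1-α)) Σ_{j=0}^{k-1} (x(j+1) - x(j)) (1 + h α/(α-1))^{k-1-j} = u(k)` for all `k`. -/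
theorem cf_integral_hZ_is_solution (α h : ℝ) (hα : α ∈ Set.Ioo (0 : ℝ) 1)
    (hh : 0 < h) (x₀ : ℝ) (u : ℕ → ℝ) (hu0 : u 0 = 0)
    (x : ℕ → ℝ)
    (hx : ∀ k : ℕ, x k = x₀ + (1 - α) * u k + α * h * ∑ j ∈ Finset.range k, u j) :
    x 0 = x₀ ∧
      ∀ k : ℕ,
        (1 / (1 - α)) *
          (∑ j ∈ Finset.range k, (x (j + 1) - x j) * (1 + h * (α / (α - 1))) ^ (k - 1 - j))
        = u k := by
  simpa only [caputoFabrizioDelta, smul_eq_mul, mul_comm (_ ^ _)] using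
    cf_integral_hZ_is_solution_general hα.2.ne h x₀ hu0 fun k => (hx k).trans (add_assoc _ _ _)
end

section
/- Let α ∈ (0,1), a < b be real numbers, x₀ ∈ ℝ, and let f : [a,b] × ℝ → ℝ be continuous and satisfy |f(t, x₁) − f(t, x₂)| ≤ L·|x₁ − x₂| for all t ∈ [a,b] and x₁, x₂ ∈ ℝ, where L > 0. If ((1−α) + α·(b−a))·L < 1, then there exists a unique continuous function x : [a,b] → ℝ satisfying x(t) = x₀ + α·∫_a^t f(τ, x(τ)) dτ + (1−α)·(f(t, x(t)) − f(a, x₀)) for all t ∈ [a,b]. -/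
open MeasureTheory intervalIntegral Set

/-!
In the norm `sup ‖u t‖ * exp (-c * (t - a))`, the integral term of the Picard operator contributes
at most `α * L / c` to its Lipschitz constant, because `∫ s in a..t, exp (c * (s - a))` is at most
`exp (c * (t - a)) / c`. For large `c` the operator is therefore a contraction as soon as
`(1 - α) * L < 1`, whatever the length of the interval, and Banach's fixed point theorem applies.
-/

open Filter Function
open scoped NNReal Topology

section WeightedContraction

variable {X E : Type*} [TopologicalSpace X] [NormedAddCommGroup E]
  {s : Set X} {ρ : X → ℝ} {K : ℝ} {T : (X → E) → X → E}

/-- The operator `T` on functions continuous on `s` is Lipschitz with constant `K` for the weighted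
supremum norm `sup ‖u t‖ / ρ t` over `t ∈ s`. The supremum is encoded by its upper bounds `D`. -/
def WeightedLipschitzOn (K : ℝ) (ρ : X → ℝ) (T : (X → E) → X → E) (s : Set X) : Prop :=
  ∀ ⦃u v : X → E⦄, ContinuousOn u s → ContinuousOn v s → ∀ ⦃D : ℝ⦄,
    (∀ t ∈ s, ‖u t - v t‖ ≤ D * ρ t) → ∀ t ∈ s, ‖T u t - T v t‖ ≤ K * D * ρ t

theorem WeightedLipschitzOn.eqOn_of_fixed (hT : WeightedLipschitzOn K ρ T s) (hK : K < 1)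
    (hs : IsCompact s) (hρ : ContinuousOn ρ s) (hρ_pos : ∀ t ∈ s, 0 < ρ t) {u v : X → E}
    (hu : ContinuousOn u s) (hv : ContinuousOn v s) (hTu : EqOn u (T u) s)
    (hTv : EqOn v (T v) s) : EqOn u v s := by
  rcases s.eq_empty_or_nonempty with rfl | hne
  · exact eqOn_empty u v
  obtain ⟨m, hm, hmax⟩ := hs.exists_isMaxOn hne
    ((hu.sub hv).norm.div hρ fun t ht => (hρ_pos t ht).ne')
  let D := ‖u m - v m‖ / ρ m
  have hle : ∀ t ∈ s, ‖u t - v t‖ ≤ D * ρ t := fun t ht =>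
    (div_le_iff₀ (hρ_pos t ht)).1 (hmax ht)
  have hself : D ≤ K * D := by
    have hTm : ‖T u m - T v m‖ ≤ K * D * ρ m := hT hu hv hle m hm
    rw [← hTu hm, ← hTv hm] at hTm
    exact (div_le_iff₀ (hρ_pos m hm)).2 hTm
  have hD_nonpos : D ≤ 0 := by nlinarith
  intro t ht
  refine sub_eq_zero.1 (norm_le_zero_iff.1 ((hle t ht).trans ?_))
  exact mul_nonpos_of_nonpos_of_nonneg hD_nonpos (hρ_pos t ht).le

theorem WeightedLipschitzOn.exists_fixed_of_weight_one [CompleteSpace E]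
    (hT : WeightedLipschitzOn K 1 T s) (hK : K < 1) (hs : IsCompact s)
    (hTc : ∀ u, ContinuousOn u s → ContinuousOn (T u) s) :
    ∃ u, ContinuousOn u s ∧ EqOn u (T u) s := by
  have : CompactSpace s := isCompact_iff_compactSpace.1 hs
  let ext (w : C(s, E)) : X → E := Function.extend Subtype.val w 0
  have ext_apply (w : C(s, E)) (t : s) : ext w t = w t := Subtype.val_injective.extend_apply _ _ t
  have ext_cont (w : C(s, E)) : ContinuousOn (ext w) s :=
    continuousOn_iff_continuous_domRestrict.2 (w.continuous.congr fun t => (ext_apply w t).symm)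
  let S (w : C(s, E)) : C(s, E) := ⟨s.domRestrict (T (ext w)), (hTc _ (ext_cont w)).domRestrict⟩
  have hS : ContractingWith K.toNNReal S := by
    refine ⟨Real.toNNReal_lt_one.2 hK, LipschitzWith.of_dist_le_mul fun w z => ?_⟩
    refine (ContinuousMap.dist_le (by positivity)).2 fun t => ?_
    have hwz : ∀ r ∈ s, ‖ext w r - ext z r‖ ≤ dist w z * (1 : X → ℝ) r := fun r hr => by
      simpa only [ext_apply w ⟨r, hr⟩, ext_apply z ⟨r, hr⟩, Pi.one_apply, mul_one, dist_eq_norm]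
        using ContinuousMap.dist_apply_le_dist (f := w) (g := z) ⟨r, hr⟩
    calc dist (S w t) (S z t) = ‖T (ext w) t - T (ext z) t‖ := dist_eq_norm _ _
      _ ≤ K * dist w z := by
          simpa only [Pi.one_apply, mul_one] using hT (ext_cont w) (ext_cont z) hwz t t.2
      _ ≤ K.toNNReal * dist w z := by gcongr; exact Real.le_coe_toNNReal K
  have hfix := hS.fixedPoint_isFixedPt
  refine ⟨ext (hS.fixedPoint S), ext_cont _, fun t ht => ?_⟩
  exact (ext_apply _ ⟨t, ht⟩).trans (DFunLike.congr_fun hfix ⟨t, ht⟩).symm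

/-- Multiplication by `ρ` carries the unweighted norm to the weighted one. -/
theorem WeightedLipschitzOn.exists_fixed [NormedSpace ℝ E] [CompleteSpace E]
    (hT : WeightedLipschitzOn K ρ T s) (hK : K < 1) (hs : IsCompact s) (hρ : ContinuousOn ρ s)
    (hρ_pos : ∀ t ∈ s, 0 < ρ t) (hTc : ∀ u, ContinuousOn u s → ContinuousOn (T u) s) :
    ∃ u, ContinuousOn u s ∧ EqOn u (T u) s := by
  let S (w : X → E) : X → E := ρ⁻¹ • T (ρ • w)
  have hρ_inv : ContinuousOn ρ⁻¹ s := hρ.inv₀ fun t ht => (hρ_pos t ht).ne'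
  have hS : WeightedLipschitzOn K 1 S s := fun w z hw hz D hD t ht => by
    have hwz : ∀ r ∈ s, ‖(ρ • w) r - (ρ • z) r‖ ≤ D * ρ r := fun r hr =>
      calc ‖ρ r • w r - ρ r • z r‖ = ‖w r - z r‖ * ρ r := by
            rw [← smul_sub, norm_smul_of_nonneg (hρ_pos r hr).le, mul_comm]
        _ ≤ D * ρ r := mul_le_mul_of_nonneg_right ((hD r hr).trans_eq (mul_one D)) (hρ_pos r hr).le
    calc ‖(ρ t)⁻¹ • T (ρ • w) t - (ρ t)⁻¹ • T (ρ • z) t‖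
        = ‖T (ρ • w) t - T (ρ • z) t‖ / ρ t := by
          rw [← smul_sub, norm_smul_of_nonneg (inv_nonneg.2 (hρ_pos t ht).le), inv_mul_eq_div]
      _ ≤ K * D := (div_le_iff₀ (hρ_pos t ht)).2 (hT (hρ.smul hw) (hρ.smul hz) hwz t ht)
      _ = K * D * (1 : X → ℝ) t := (mul_one _).symm
  obtain ⟨w, hw, hSw⟩ := hS.exists_fixed_of_weight_one hK hs fun w hw =>
    hρ_inv.smul (hTc _ (hρ.smul hw))
  exact ⟨ρ • w, hρ.smul hw, fun t ht => (eq_inv_smul_iff₀ (hρ_pos t ht).ne').1 (hSw ht)⟩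

end WeightedContraction

theorem exists_pos_add_div_mul_lt_one {p q L : ℝ} (h : p * L < 1) :
    ∃ c > 0, (p + q / c) * L < 1 := by
  have hlim : Tendsto (fun c : ℝ => (p + q / c) * L) atTop (𝓝 ((p + 0) * L)) :=
    ((tendsto_const_nhds.div_atTop tendsto_id).const_add p).mul_const L
  rw [add_zero] at hlim
  exact ((eventually_gt_atTop 0).and (hlim.eventually_lt_const h)).exists

theorem integral_exp_mul_sub_le {c : ℝ} (hc : 0 < c) (a t : ℝ) :
    ∫ τ in a..t, Real.exp (c * (τ - a)) ≤ Real.exp (c * (t - a)) / c := by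
  have heq : ∫ τ in a..t, Real.exp (c * (τ - a)) = (Real.exp (c * (t - a)) - 1) / c := by
    rw [integral_comp_sub_right fun r => Real.exp (c * r), integral_comp_mul_left Real.exp hc.ne',
      integral_exp, sub_self, mul_zero, Real.exp_zero, smul_eq_mul, inv_mul_eq_div]
  rw [heq]
  gcongr
  linarith

section CaputoFabrizio

variable {E : Type*} [NormedAddCommGroup E] [NormedSpace ℝ E] {α a b c : ℝ}

/-- The Caputo–Fabrizio fractional integral of order `α` based at `a`, normalised by `M(α) = 1`. -/
noncomputable def cfIntegral (α a : ℝ) (u : ℝ → E) (t : ℝ) : E :=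
  (1 - α) • u t + α • ∫ τ in a..t, u τ

theorem cfIntegral_sub {u v : ℝ → E} (hu : ContinuousOn u (Icc a b))
    (hv : ContinuousOn v (Icc a b)) {t : ℝ} (ht : t ∈ Icc a b) :
    cfIntegral α a (u - v) t = cfIntegral α a u t - cfIntegral α a v t := by
  have hsub : Icc a t ⊆ Icc a b := Icc_subset_Icc_right ht.2
  simp only [cfIntegral, Pi.sub_apply]
  rw [integral_sub ((hu.mono hsub).intervalIntegrable_of_Icc ht.1)
    ((hv.mono hsub).intervalIntegrable_of_Icc ht.1)]
  module

theorem norm_cfIntegral_le_exp (hα : α ∈ Icc 0 1) (hc : 0 < c) {u : ℝ → E} {C t : ℝ} (hat : a ≤ t)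
    (hu : ∀ τ ∈ Icc a t, ‖u τ‖ ≤ C * Real.exp (c * (τ - a))) :
    ‖cfIntegral α a u t‖ ≤ (1 - α + α / c) * C * Real.exp (c * (t - a)) := by
  obtain ⟨hα₀, hα₁⟩ := hα
  have hC : 0 ≤ C := by simpa using (norm_nonneg _).trans (hu a (left_mem_Icc.2 hat))
  have hint : ‖∫ τ in a..t, u τ‖ ≤ C * (Real.exp (c * (t - a)) / c) :=
    calc ‖∫ τ in a..t, u τ‖ ≤ ∫ τ in a..t, C * Real.exp (c * (τ - a)) :=
          intervalIntegral.norm_integral_le_of_norm_le hat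
            (ae_of_all _ fun τ hτ => hu τ (Ioc_subset_Icc_self hτ))
            (Continuous.intervalIntegrable (by fun_prop) a t)
      _ = C * ∫ τ in a..t, Real.exp (c * (τ - a)) := integral_const_mul _ _
      _ ≤ C * (Real.exp (c * (t - a)) / c) := by gcongr; exact integral_exp_mul_sub_le hc a t
  calc ‖cfIntegral α a u t‖ ≤ (1 - α) * ‖u t‖ + α * ‖∫ τ in a..t, u τ‖ := by
        refine (norm_add_le _ _).trans_eq ?_
        rw [norm_smul_of_nonneg (sub_nonneg.2 hα₁), norm_smul_of_nonneg hα₀]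
    _ ≤ (1 - α) * (C * Real.exp (c * (t - a))) + α * (C * (Real.exp (c * (t - a)) / c)) := by
        have := sub_nonneg.2 hα₁
        gcongr
        exact hu t (right_mem_Icc.2 hat)
    _ = (1 - α + α / c) * C * Real.exp (c * (t - a)) := by ring

/-- The Picard operator of the Caputo–Fabrizio initial value problem with right-hand side `f` and
initial value `x₀` at `a`: it sends `x` to `x₀ + I (f(·, x)) - (1 - α) • f(a, x₀)`, where `I` is
`cfIntegral α a`, with the two terms in `1 - α` collected. -/
noncomputable def cfPicard (α a : ℝ) (x₀ : E) (f : ℝ → E → E) (x : ℝ → E) (t : ℝ) : E :=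
  x₀ + α • (∫ τ in a..t, f τ (x τ)) + (1 - α) • (f t (x t) - f a x₀)

variable {x₀ : E} {f : ℝ → E → E} {L : ℝ≥0}

theorem continuousOn_cfPicard (hab : a ≤ b) (hf : ContinuousOn (uncurry f) (Icc a b ×ˢ univ))
    {x : ℝ → E} (hx : ContinuousOn x (Icc a b)) : ContinuousOn (cfPicard α a x₀ f x) (Icc a b) := by
  have hfx := ODE.continuousOn_comp hf hx (mapsTo_univ _ _)
  have hint : ContinuousOn (fun t => ∫ τ in a..t, f τ (x τ)) (Icc a b) := by
    have hprim := continuousOn_primitive_interval' (μ := volume)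
      (hfx.intervalIntegrable_of_Icc hab) left_mem_uIcc
    rwa [uIcc_of_le hab] at hprim
  exact (continuousOn_const.add (hint.const_smul α)).add
    ((hfx.sub continuousOn_const).const_smul (1 - α))

theorem weightedLipschitzOn_cfPicard (hα : α ∈ Icc 0 1) (hc : 0 < c)
    (hf : ContinuousOn (uncurry f) (Icc a b ×ˢ univ))
    (hlip : ∀ t ∈ Icc a b, LipschitzWith L (f t)) :
    WeightedLipschitzOn ((1 - α + α / c) * L) (fun t => Real.exp (c * (t - a)))
      (cfPicard α a x₀ f) (Icc a b) := by
  intro x y hx hy D hxy t ht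
  have hdiff : cfPicard α a x₀ f x t - cfPicard α a x₀ f y t =
      cfIntegral α a ((fun τ => f τ (x τ)) - fun τ => f τ (y τ)) t := by
    rw [cfIntegral_sub (ODE.continuousOn_comp hf hx (mapsTo_univ _ _))
      (ODE.continuousOn_comp hf hy (mapsTo_univ _ _)) ht]
    simp only [cfPicard, cfIntegral]
    module
  rw [hdiff, mul_assoc _ (L : ℝ) D]
  refine norm_cfIntegral_le_exp hα hc ht.1 fun τ hτ => ?_
  have hτb : τ ∈ Icc a b := Icc_subset_Icc_right ht.2 hτ
  calc ‖f τ (x τ) - f τ (y τ)‖ ≤ L * ‖x τ - y τ‖ := (hlip τ hτb).norm_sub_le _ _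
    _ ≤ L * (D * Real.exp (c * (τ - a))) := by gcongr; exact hxy τ hτb
    _ = L * D * Real.exp (c * (τ - a)) := (mul_assoc _ _ _).symm

theorem cf_nonlinear_exists_unique_general [CompleteSpace E] (hα : α ∈ Icc 0 1) (hab : a ≤ b)
    (hf : ContinuousOn (uncurry f) (Icc a b ×ˢ univ))
    (hlip : ∀ t ∈ Icc a b, LipschitzWith L (f t)) (hsmall : (1 - α) * L < 1) :
    (∃ x : ℝ → E, ContinuousOn x (Icc a b) ∧ EqOn x (cfPicard α a x₀ f x) (Icc a b)) ∧
    ∀ x y : ℝ → E, ContinuousOn x (Icc a b) → ContinuousOn y (Icc a b) →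
      EqOn x (cfPicard α a x₀ f x) (Icc a b) → EqOn y (cfPicard α a x₀ f y) (Icc a b) →
      EqOn x y (Icc a b) := by
  obtain ⟨c, hc, hK⟩ := exists_pos_add_div_mul_lt_one (q := α) hsmall
  have hT := weightedLipschitzOn_cfPicard (x₀ := x₀) hα hc hf hlip
  have hρ : ContinuousOn (fun t => Real.exp (c * (t - a))) (Icc a b) := by fun_prop
  have hρ_pos : ∀ t ∈ Icc a b, 0 < Real.exp (c * (t - a)) := fun t _ => Real.exp_pos _
  exact ⟨hT.exists_fixed hK isCompact_Icc hρ hρ_pos fun x => continuousOn_cfPicard hab hf,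
    fun x y => hT.eqOn_of_fixed hK isCompact_Icc hρ hρ_pos⟩

end CaputoFabrizio

/-- Existence and uniqueness for the nonlinear Caputo–Fabrizio initial value problem on
`𝕋 = ℝ`: if `f` is continuous on `[a,b] × ℝ`, Lipschitz in the second variable with
constant `L`, and `((1-α) + α(b-a)) L < 1`, then there is a continuous function
`x : [a,b] → ℝ` satisfying the fixed-point equation
`x(t) = x₀ + α ∫_a^t f(τ, x(τ)) dτ + (1-α)(f(t, x(t)) - f(a, x₀))`,
and it is unique on `[a,b]`. -/
theorem cf_nonlinear_exists_unique (α a b L x₀ : ℝ) (hα : α ∈ Set.Ioo (0 : ℝ) 1)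
    (hab : a < b) (hL : 0 < L)
    (f : ℝ → ℝ → ℝ)
    (hf : ContinuousOn (fun p : ℝ × ℝ => f p.1 p.2) (Set.Icc a b ×ˢ Set.univ))
    (hlip : ∀ t ∈ Set.Icc a b, ∀ x₁ x₂ : ℝ, |f t x₁ - f t x₂| ≤ L * |x₁ - x₂|)
    (hsmall : ((1 - α) + α * (b - a)) * L < 1) :
    (∃ x : ℝ → ℝ, ContinuousOn x (Set.Icc a b) ∧
      ∀ t ∈ Set.Icc a b,
        x t = x₀ + α * (∫ τ in a..t, f τ (x τ)) + (1 - α) * (f t (x t) - f a x₀))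
    ∧
    (∀ x y : ℝ → ℝ,
      ContinuousOn x (Set.Icc a b) → ContinuousOn y (Set.Icc a b) →
      (∀ t ∈ Set.Icc a b,
        x t = x₀ + α * (∫ τ in a..t, f τ (x τ)) + (1 - α) * (f t (x t) - f a x₀)) →
      (∀ t ∈ Set.Icc a b,
        y t = x₀ + α * (∫ τ in a..t, f τ (y τ)) + (1 - α) * (f t (y t) - f a x₀)) →
      ∀ t ∈ Set.Icc a b, x t = y t) := by
  have hL' : (1 - α) * L < 1 := by linarith [mul_pos (mul_pos hα.1 (sub_pos.2 hab)) hL]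
  lift L to ℝ≥0 using hL.le
  exact cf_nonlinear_exists_unique_general (Ioo_subset_Icc_self hα) hab.le hf
    (fun t ht => LipschitzWith.of_dist_le_mul (hlip t ht)) hL'
end

section
/- Let α ∈ (0,1), a < b be real numbers, x₀ ∈ ℝ, and let f : [a,b] × ℝ → ℝ be continuous and satisfy |f(t, x₁) − f(t, x₂)| ≤ L·|x₁ − x₂| for all t ∈ [a,b] and x₁, x₂ ∈ ℝ, where L > 0. Define the operator 𝒩 on continuous functions x : [a,b] → ℝ by (𝒩x)(t) = x₀ + α·∫_a^t f(τ, x(τ)) dτ + (1−α)·(f(t, x(t)) − f(a, x₀)). Then for all continuous x₁, x₂ : [a,b] → ℝ, sup_{t ∈ [a,b]} |(𝒩x₁)(t) − (𝒩x₂)(t)| ≤ ((1−α) + α·(b−a))·L · sup_{t ∈ [a,b]} |x₁(t) − x₂(t)|. -/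
open MeasureTheory intervalIntegral Set

theorem continuousOn_superposition {X Y Z : Type*} [TopologicalSpace X] [TopologicalSpace Y]
    [TopologicalSpace Z] {f : X → Y → Z} {s : Set X}
    (hf : ContinuousOn (Function.uncurry f) (s ×ˢ univ)) {x : X → Y} (hx : ContinuousOn x s) :
    ContinuousOn (fun τ => f τ (x τ)) s :=
  hf.comp (continuousOn_id.prodMk hx) fun _ hτ => ⟨hτ, mem_univ _⟩

section CaputoFabrizio

variable {E : Type*} [NormedAddCommGroup E] [NormedSpace ℝ E]

/-- The fixed-point operator `𝒩` of the Caputo–Fabrizio initial value problem of order `α` with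
right-hand side `f` and initial value `x₀` at `a`, for the normalisation `M(α) = 1`. It acts on
functions defined on all of `ℝ`; only their values on the time interval matter. -/
noncomputable def cfOperator (α a : ℝ) (x₀ : E) (f : ℝ → E → E) (x : ℝ → E) (t : ℝ) : E :=
  x₀ + α • (∫ τ in a..t, f τ (x τ)) + (1 - α) • (f t (x t) - f a x₀)

variable {α a b t C L : ℝ} {x₀ : E} {f : ℝ → E → E} {x₁ x₂ : ℝ → E}

theorem cfOperator_sub_cfOperator
    (h₁ : IntervalIntegrable (fun τ => f τ (x₁ τ)) volume a t)
    (h₂ : IntervalIntegrable (fun τ => f τ (x₂ τ)) volume a t) :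
    cfOperator α a x₀ f x₁ t - cfOperator α a x₀ f x₂ t =
      (1 - α) • (f t (x₁ t) - f t (x₂ t)) + α • ∫ τ in a..t, (f τ (x₁ τ) - f τ (x₂ τ)) := by
  rw [integral_sub h₁ h₂, cfOperator, cfOperator]
  module

theorem norm_cfOperator_sub_cfOperator_le (hat : a ≤ t)
    (h₁ : IntervalIntegrable (fun τ => f τ (x₁ τ)) volume a t)
    (h₂ : IntervalIntegrable (fun τ => f τ (x₂ τ)) volume a t)
    (hC : ∀ τ ∈ Icc a t, ‖f τ (x₁ τ) - f τ (x₂ τ)‖ ≤ C) :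
    ‖cfOperator α a x₀ f x₁ t - cfOperator α a x₀ f x₂ t‖ ≤ (|1 - α| + |α| * (t - a)) * C := by
  have norm_integral_le : ‖∫ τ in a..t, (f τ (x₁ τ) - f τ (x₂ τ))‖ ≤ C * (t - a) := by
    rw [← abs_of_nonneg (sub_nonneg.2 hat)]
    refine norm_integral_le_of_norm_le_const fun τ hτ => hC τ ?_
    rw [uIoc_of_le hat] at hτ
    exact Ioc_subset_Icc_self hτ
  calc ‖cfOperator α a x₀ f x₁ t - cfOperator α a x₀ f x₂ t‖
      ≤ ‖(1 - α) • (f t (x₁ t) - f t (x₂ t))‖ +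
          ‖α • ∫ τ in a..t, (f τ (x₁ τ) - f τ (x₂ τ))‖ := by
        rw [cfOperator_sub_cfOperator h₁ h₂]
        exact norm_add_le _ _
    _ = |1 - α| * ‖f t (x₁ t) - f t (x₂ t)‖ +
          |α| * ‖∫ τ in a..t, (f τ (x₁ τ) - f τ (x₂ τ))‖ := by
        simp only [norm_smul, Real.norm_eq_abs]
    _ ≤ |1 - α| * C + |α| * (C * (t - a)) := by
        gcongr
        exact hC t (right_mem_Icc.2 hat)
    _ = (|1 - α| + |α| * (t - a)) * C := by ring

theorem cf_operator_contraction_general [CompleteSpace E] (hab : a ≤ b) (hL : 0 ≤ L)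
    (hf : ContinuousOn (Function.uncurry f) (Icc a b ×ˢ univ))
    (hlip : ∀ t ∈ Icc a b, ∀ y₁ y₂ : E, ‖f t y₁ - f t y₂‖ ≤ L * ‖y₁ - y₂‖)
    (hx₁ : ContinuousOn x₁ (Icc a b)) (hx₂ : ContinuousOn x₂ (Icc a b)) :
    (⨆ t : Icc a b, ‖cfOperator α a x₀ f x₁ t - cfOperator α a x₀ f x₂ t‖) ≤
      (|1 - α| + |α| * (b - a)) * L * ⨆ t : Icc a b, ‖x₁ t - x₂ t‖ := by
  have : Nonempty (Icc a b) := nonempty_Icc_subtype hab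
  set S : ℝ := ⨆ t : Icc a b, ‖x₁ t - x₂ t‖
  have norm_sub_le_S : ∀ τ ∈ Icc a b, ‖x₁ τ - x₂ τ‖ ≤ S := fun τ hτ =>
    le_ciSup_set (isCompact_Icc.bddAbove_image (hx₁.sub hx₂).norm) hτ
  have S_nonneg : 0 ≤ S := Real.iSup_nonneg fun _ => norm_nonneg _
  have norm_f_sub_le : ∀ τ ∈ Icc a b, ‖f τ (x₁ τ) - f τ (x₂ τ)‖ ≤ L * S := fun τ hτ =>
    (hlip τ hτ _ _).trans (mul_le_mul_of_nonneg_left (norm_sub_le_S τ hτ) hL)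
  refine ciSup_le fun ⟨t, hat, htb⟩ => ?_
  have hsub : Icc a t ⊆ Icc a b := Icc_subset_Icc_right htb
  have integrable_f {x : ℝ → E} (hx : ContinuousOn x (Icc a b)) :
      IntervalIntegrable (fun τ => f τ (x τ)) volume a t :=
    ((continuousOn_superposition hf hx).mono hsub).intervalIntegrable_of_Icc hat
  calc ‖cfOperator α a x₀ f x₁ t - cfOperator α a x₀ f x₂ t‖
      ≤ (|1 - α| + |α| * (t - a)) * (L * S) :=
        norm_cfOperator_sub_cfOperator_le hat (integrable_f hx₁) (integrable_f hx₂)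
          fun τ hτ => norm_f_sub_le τ (hsub hτ)
    _ ≤ (|1 - α| + |α| * (b - a)) * (L * S) := by gcongr
    _ = (|1 - α| + |α| * (b - a)) * L * S := (mul_assoc _ _ _).symm

end CaputoFabrizio

/-- Contraction estimate for the Caputo–Fabrizio fixed-point operator
`(𝒩x)(t) = x₀ + α ∫_a^t f(τ, x(τ)) dτ + (1-α)(f(t, x(t)) - f(a, x₀))` on `C([a,b])`:
`sup_{t ∈ [a,b]} |(𝒩x₁)(t) - (𝒩x₂)(t)| ≤ ((1-α) + α(b-a)) L · sup_{t ∈ [a,b]} |x₁(t) - x₂(t)|`. -/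
theorem cf_operator_contraction (α a b L x₀ : ℝ) (hα : α ∈ Set.Ioo (0 : ℝ) 1)
    (hab : a < b) (hL : 0 < L)
    (f : ℝ → ℝ → ℝ)
    (hf : ContinuousOn (fun p : ℝ × ℝ => f p.1 p.2) (Set.Icc a b ×ˢ Set.univ))
    (hlip : ∀ t ∈ Set.Icc a b, ∀ y₁ y₂ : ℝ, |f t y₁ - f t y₂| ≤ L * |y₁ - y₂|)
    (N : (ℝ → ℝ) → ℝ → ℝ)
    (hN : ∀ x : ℝ → ℝ, ∀ t : ℝ,
      N x t = x₀ + α * (∫ τ in a..t, f τ (x τ)) + (1 - α) * (f t (x t) - f a x₀))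
    (x₁ x₂ : ℝ → ℝ)
    (hx₁ : ContinuousOn x₁ (Set.Icc a b)) (hx₂ : ContinuousOn x₂ (Set.Icc a b)) :
    (⨆ t : Set.Icc a b, |N x₁ t - N x₂ t|)
      ≤ ((1 - α) + α * (b - a)) * L * ⨆ t : Set.Icc a b, |x₁ t - x₂ t| := by
  obtain rfl : N = cfOperator α a x₀ f := funext₂ hN
  simpa only [Real.norm_eq_abs, abs_of_pos hα.1, abs_of_pos (sub_pos.2 hα.2)] using
    cf_operator_contraction_general (α := α) (x₀ := x₀) hab.le hL.le hf hlip hx₁ hx₂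
end

section
/- Let α ∈ (0,1), let a < b be integers, x₀ ∈ ℝ, and let f : ℤ × ℝ → ℝ satisfy |f(t, x₁) − f(t, x₂)| ≤ L·|x₁ − x₂| for all integers t ∈ [a,b] and all x₁, x₂ ∈ ℝ, where L > 0. If ((1−α) + α·(b−a))·L < 1, then there exists a unique function x : {a, a+1, …, b} → ℝ satisfying x(t) = x₀ + α·Σ_{τ=a}^{t−1} f(τ, x(τ)) + (1−α)·(f(t, x(t)) − f(a, x₀)) for all t ∈ {a, a+1, …, b}. -/
open Finset

/-!
The right-hand side of the equation at time `t` depends on `x` only through the strictly earlier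
values and through `x t` itself. Since `α (b - a) L ≥ 0`, the smallness condition gives
`(1 - α) L < 1`, so for a given past the equation for the single unknown `x t` is a fixed-point
equation of a contraction of `ℝ`. It therefore has exactly one solution, and the whole function `x`
is determined by recursion on time.
-/

section CausalRecursion

variable {ι β γ : Type*} [Preorder ι] {s : Set ι}

/-- An operator on functions `ι → β` is strictly causal on `s` if the value of its output at a time
`t ∈ s` depends only on the values of the input at the times of `s` strictly before `t`. Taking
`γ = β → β` covers right-hand sides of implicit equations `x t = F x t (x t)`. -/
def StrictlyCausalOn (F : (ι → β) → ι → γ) (s : Set ι) : Prop :=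
  ∀ t ∈ s, ∀ x y : ι → β, Set.EqOn x y (s ∩ Set.Iio t) → F x t = F y t

namespace StrictlyCausalOn

theorem exists_eqOn_self [Nonempty β] {T : (ι → β) → ι → β} (hT : StrictlyCausalOn T s)
    (hs : s.IsWF) : ∃ x, Set.EqOn x (T x) s := by
  classical
  let z : ι → β := fun _ => Classical.arbitrary β
  let r : ι → ι → Prop := fun τ t => τ < t ∧ τ ∈ s ∧ t ∈ s
  have hr : WellFounded r := Set.wellFoundedOn_iff.1 hs
  let x : ι → β := hr.fix fun t past => T (fun τ => if h : r τ t then past τ h else z τ) t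
  have hx (t : ι) : x t = T (fun τ => if r τ t then x τ else z τ) t := hr.fix_eq _ t
  refine ⟨x, fun t ht => (hx t).trans (hT t ht _ _ fun τ hτ => ?_)⟩
  exact if_pos ⟨hτ.2, hτ.1, ht⟩

variable {F : (ι → β) → ι → β → β}

theorem exists_implicit_solution [Nonempty β] (hF : StrictlyCausalOn F s) (hs : s.IsWF)
    (hsolve : ∀ t ∈ s, ∀ x, ∃ u, u = F x t u) : ∃ x : ι → β, ∀ t ∈ s, x t = F x t (x t) := by
  classical
  -- The chosen solution must be a function of `F x t`, not of `x`, for `T` to inherit causality.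
  let solve : (β → β) → β := fun g => Classical.epsilon fun u => u = g u
  let T : (ι → β) → ι → β := fun x t => solve (F x t)
  have hT : StrictlyCausalOn T s := fun t ht x y hxy => congrArg solve (hF t ht x y hxy)
  obtain ⟨x, hx⟩ := hT.exists_eqOn_self hs
  refine ⟨x, fun t ht => ?_⟩
  rw [hx ht]
  exact Classical.epsilon_spec (hsolve t ht x)

theorem eqOn_of_implicit_solution (hF : StrictlyCausalOn F s) (hs : s.IsWF)
    (hunique : ∀ t ∈ s, ∀ x u v, u = F x t u → v = F x t v → u = v) {x y : ι → β}
    (hx : ∀ t ∈ s, x t = F x t (x t)) (hy : ∀ t ∈ s, y t = F y t (y t)) : Set.EqOn x y s := by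
  intro t ht
  refine Set.WellFoundedOn.induction (P := fun t => x t = y t) hs ht fun t ht ih => ?_
  have hpast : F x t = F y t := hF t ht x y fun τ hτ => ih τ hτ.1 hτ.2
  exact hunique t ht x _ _ (hx t ht) (by rw [hpast]; exact hy t ht)

end StrictlyCausalOn

end CausalRecursion

theorem existsUnique_eq_add_smul {𝕜 E : Type*} [NormedField 𝕜] [NormedAddCommGroup E]
    [NormedSpace 𝕜 E] [CompleteSpace E] {g : E → E} {c : 𝕜} {L : ℝ}
    (hg : ∀ u v, ‖g u - g v‖ ≤ L * ‖u - v‖) (hc : ‖c‖ * L < 1) (p : E) :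
    ∃! u, u = p + c • g u := by
  have hcontr : ContractingWith (‖c‖ * L).toNNReal fun u => p + c • g u := by
    refine ⟨Real.toNNReal_lt_one.2 hc, LipschitzWith.of_dist_le' fun u v => ?_⟩
    calc dist (p + c • g u) (p + c • g v) = ‖c‖ * ‖g u - g v‖ := by
          rw [dist_add_left, dist_smul₀, dist_eq_norm]
      _ ≤ ‖c‖ * (L * ‖u - v‖) := by gcongr; exact hg u v
      _ = ‖c‖ * L * dist u v := by rw [dist_eq_norm, mul_assoc]
  exact ⟨_, hcontr.fixedPoint_isFixedPt.symm, fun u hu => hcontr.fixedPoint_unique hu.symm⟩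

section CaputoFabrizio

variable {E : Type*} [NormedAddCommGroup E] [NormedSpace ℝ E]

/-- The right-hand side of the Caputo–Fabrizio fixed-point equation on `ℤ`, with the past `x` of the
solution separated from the unknown value `u` at time `t`: a solution satisfies
`x t = cfRHS α x₀ a f x t (x t)`. -/
noncomputable def cfRHS (α : ℝ) (x₀ : E) (a : ℤ) (f : ℤ → E → E) (x : ℤ → E) (t : ℤ) (u : E) : E :=
  x₀ + α • (∑ τ ∈ Ico a t, f τ (x τ)) + (1 - α) • (f t u - f a x₀)

theorem strictlyCausalOn_cfRHS (α : ℝ) (x₀ : E) {a : ℤ} (f : ℤ → E → E) {J : Set ℤ}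
    (hJ : ∀ t ∈ J, Set.Ico a t ⊆ J) : StrictlyCausalOn (cfRHS α x₀ a f) J := by
  intro t ht x y hxy
  have hsum : ∑ τ ∈ Ico a t, f τ (x τ) = ∑ τ ∈ Ico a t, f τ (y τ) := by
    refine sum_congr rfl fun τ hτ => ?_
    have hτ' := mem_Ico.1 hτ
    rw [hxy ⟨hJ t ht hτ', hτ'.2⟩]
  funext u
  simp only [cfRHS, hsum]

theorem existsUnique_eq_cfRHS [CompleteSpace E] {α L : ℝ} {f : ℤ → E → E} {t : ℤ}
    (hlip : ∀ u v, ‖f t u - f t v‖ ≤ L * ‖u - v‖) (hα : |1 - α| * L < 1) (x₀ : E) (a : ℤ)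
    (x : ℤ → E) : ∃! u, u = cfRHS α x₀ a f x t u :=
  existsUnique_eq_add_smul (g := fun u => f t u - f a x₀)
    (by simpa only [sub_sub_sub_cancel_right] using hlip) hα _

theorem cf_nonlinear_exists_unique_Z_general [CompleteSpace E] {α : ℝ} {L : ℤ → ℝ} (x₀ : E) {a : ℤ}
    {J : Set ℤ} (hJa : J ⊆ Set.Ici a) (hJ : ∀ t ∈ J, Set.Ico a t ⊆ J) {f : ℤ → E → E}
    (hlip : ∀ t ∈ J, ∀ u v, ‖f t u - f t v‖ ≤ L t * ‖u - v‖)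
    (hsmall : ∀ t ∈ J, |1 - α| * L t < 1) :
    (∃ x : ℤ → E, ∀ t ∈ J,
      x t = x₀ + α • (∑ τ ∈ Ico a t, f τ (x τ)) + (1 - α) • (f t (x t) - f a x₀)) ∧
    ∀ x y : ℤ → E,
      (∀ t ∈ J,
        x t = x₀ + α • (∑ τ ∈ Ico a t, f τ (x τ)) + (1 - α) • (f t (x t) - f a x₀)) →
      (∀ t ∈ J,
        y t = x₀ + α • (∑ τ ∈ Ico a t, f τ (y τ)) + (1 - α) • (f t (y t) - f a x₀)) →
      ∀ t ∈ J, x t = y t := by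
  have hwf : J.IsWF := (bddBelow_Ici.mono hJa).isWF
  have hcausal : StrictlyCausalOn (cfRHS α x₀ a f) J := strictlyCausalOn_cfRHS α x₀ f hJ
  have hsolve (t : ℤ) (ht : t ∈ J) (x : ℤ → E) : ∃! u, u = cfRHS α x₀ a f x t u :=
    existsUnique_eq_cfRHS (hlip t ht) (hsmall t ht) x₀ a x
  exact ⟨hcausal.exists_implicit_solution hwf fun t ht x => (hsolve t ht x).exists,
    fun x y hx hy t ht => hcausal.eqOn_of_implicit_solution hwf
      (fun t ht x _ _ hu hv => (hsolve t ht x).unique hu hv) hx hy ht⟩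

end CaputoFabrizio

/-- Existence and uniqueness for the nonlinear Caputo–Fabrizio initial value problem on
the time scale `𝕋 = ℤ`: if `f` is Lipschitz in the second variable with constant `L` on
`[a,b] × ℝ` and `((1-α) + α(b-a)) L < 1`, then there is a function `x` on the integer
interval `{a, …, b}` satisfying the fixed-point equation
`x(t) = x₀ + α Σ_{τ=a}^{t-1} f(τ, x(τ)) + (1-α)(f(t, x(t)) - f(a, x₀))`,
and it is unique on `{a, …, b}`. -/
theorem cf_nonlinear_exists_unique_Z (α L x₀ : ℝ) (a b : ℤ) (hα : α ∈ Set.Ioo (0 : ℝ) 1)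
    (hab : a < b) (hL : 0 < L)
    (f : ℤ → ℝ → ℝ)
    (hlip : ∀ t ∈ Set.Icc a b, ∀ x₁ x₂ : ℝ, |f t x₁ - f t x₂| ≤ L * |x₁ - x₂|)
    (hsmall : ((1 - α) + α * ((b : ℝ) - (a : ℝ))) * L < 1) :
    (∃ x : ℤ → ℝ,
      ∀ t ∈ Set.Icc a b,
        x t = x₀ + α * (∑ τ ∈ Finset.Ico a t, f τ (x τ)) + (1 - α) * (f t (x t) - f a x₀))
    ∧
    (∀ x y : ℤ → ℝ,
      (∀ t ∈ Set.Icc a b,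
        x t = x₀ + α * (∑ τ ∈ Finset.Ico a t, f τ (x τ)) + (1 - α) * (f t (x t) - f a x₀)) →
      (∀ t ∈ Set.Icc a b,
        y t = x₀ + α * (∑ τ ∈ Finset.Ico a t, f τ (y τ)) + (1 - α) * (f t (y t) - f a x₀)) →
      ∀ t ∈ Set.Icc a b, x t = y t) := by
  have hlength : 0 ≤ (b : ℝ) - a := sub_nonneg.2 (Int.cast_le.2 hab.le)
  have hmemory : 0 ≤ α * ((b : ℝ) - a) * L := mul_nonneg (mul_nonneg hα.1.le hlength) hL.le
  have hcontr : |1 - α| * L < 1 := by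
    rw [abs_of_pos (sub_pos.2 hα.2)]
    linarith
  have hpast (t : ℤ) (ht : t ∈ Set.Icc a b) : Set.Ico a t ⊆ Set.Icc a b :=
    fun _ hτ => ⟨hτ.1, hτ.2.le.trans ht.2⟩
  exact cf_nonlinear_exists_unique_Z_general x₀ Set.Icc_subset_Ici_self hpast hlip fun _ _ => hcontr
end
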